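/- arXiv:1509.02846 — 10 statements merged into one kernel-verified Lean document; each statement's English description precedes it below -/
import Mathlib

section
/- Let z1 ∈ ℝ be a barrier, β ∈ (−1,1), μ ∈ ℝ, and let λ ∈ ℂ be such that μ² + 2λ ∉ (−∞,0]; write w = √(μ²+2λ) (principal square root, so Re w > 0). Define u±(x) = exp(−μx ∓ w x), coefficients A = (1 + βμ/w)/(1+β), B = (1−A) e^{2 w z1}, F = (1 + βμ/w)/(1−β), E = (1−F) e^{−2 w z1}, and the piecewise functions U−(x) = u−(x) for x ≤ z1 and U−(x) = A u−(x) + B u+(x) for x ≥ z1; U+(x) = E u−(x) + F u+(x) for x ≤ z1 and U+(x) = u+(x) for x ≥ z1. Let h(x) = k(x) e^{2μx} with k(x) = (1−β)/2 for x < z1 and k(x) = (1+β)/2 for x ≥ z1. Then U− and U+ are continuous at z1, and for every x ≠ z1 the weighted Wronskian h(x)(U−(x) U+′(x) − U−′(x) U+(x)) is constant, equal to −(w + βμ). -/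
open Complex

/-- continuity at the barrier and constancy of the weighted Wronskian
for the eigenfunctions of the generator of the β-SBM with drift μ. -/
theorem wronskian_one_barrier_drift
    (z1 β μ : ℝ) (hβ : β ∈ Set.Ioo (-1 : ℝ) 1) (lam : ℂ)
    (hlam : ∀ r : ℝ, r ≤ 0 → (μ : ℂ) ^ 2 + 2 * lam ≠ (r : ℂ)) :
    let w : ℂ := ((μ : ℂ) ^ 2 + 2 * lam) ^ ((1 : ℂ) / 2)
    let um : ℝ → ℂ := fun x => Complex.exp (-(μ : ℂ) * x + w * x)
    let up : ℝ → ℂ := fun x => Complex.exp (-(μ : ℂ) * x - w * x)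
    let A : ℂ := (1 + (β : ℂ) * μ / w) / (1 + β)
    let B : ℂ := (1 - A) * Complex.exp (2 * w * z1)
    let F : ℂ := (1 + (β : ℂ) * μ / w) / (1 - β)
    let E : ℂ := (1 - F) * Complex.exp (-2 * w * z1)
    let Um : ℝ → ℂ := fun x => if x ≤ z1 then um x else A * um x + B * up x
    let Up : ℝ → ℂ := fun x => if x ≤ z1 then E * um x + F * up x else up x
    let k : ℝ → ℝ := fun x => if x < z1 then (1 - β) / 2 else (1 + β) / 2
    let h : ℝ → ℝ := fun x => k x * Real.exp (2 * μ * x)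
    ContinuousAt Um z1 ∧ ContinuousAt Up z1 ∧
      ∀ x : ℝ, x ≠ z1 → ∃ dm dp : ℂ,
        HasDerivAt Um dm x ∧ HasDerivAt Up dp x ∧
          (h x : ℂ) * (Um x * dp - dm * Up x) = -(w + (β : ℂ) * μ) := by
  intro w um up A B F E Um Up k h
  have hw : w ≠ 0 := by
    have h0 : (μ : ℂ) ^ 2 + 2 * lam ≠ 0 := by simpa using hlam 0 le_rfl
    intro hw
    exact h0 ((Complex.cpow_eq_zero_iff _ _).1 hw).1
  have hb1 : (1 + (β : ℂ)) ≠ 0 := by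
    have : (1 + β) ≠ 0 := by linarith [hβ.1]
    exact_mod_cast this
  have hb2 : (1 - (β : ℂ)) ≠ 0 := by
    have : (1 - β) ≠ 0 := by linarith [hβ.2]
    exact_mod_cast this
  have dum : ∀ x : ℝ, HasDerivAt um ((-(μ : ℂ) + w) * um x) x := by
    intro x
    have hid : HasDerivAt (fun y : ℝ => (y : ℂ)) 1 x := Complex.ofRealCLM.hasDerivAt
    have := ((hid.const_mul (-(μ : ℂ))).add (hid.const_mul w)).cexp
    refine this.congr_deriv ?_
    simp only [um, Pi.add_apply]; ring
  have dup : ∀ x : ℝ, HasDerivAt up ((-(μ : ℂ) - w) * up x) x := by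
    intro x
    have hid : HasDerivAt (fun y : ℝ => (y : ℂ)) 1 x := Complex.ofRealCLM.hasDerivAt
    have := ((hid.const_mul (-(μ : ℂ))).sub (hid.const_mul w)).cexp
    refine this.congr_deriv ?_
    simp only [up, Pi.sub_apply]; ring
  have cum : Continuous um := continuous_iff_continuousAt.2 fun x => (dum x).continuousAt
  have cup : Continuous up := continuous_iff_continuousAt.2 fun x => (dup x).continuousAt
  have e1 : Complex.exp (2 * w * z1) * up z1 = um z1 := by
    simp only [up, um]; rw [← Complex.exp_add]; congr 1; ring
  have e2 : Complex.exp (-2 * w * z1) * um z1 = up z1 := by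
    simp only [up, um]; rw [← Complex.exp_add]; congr 1; ring
  have key : ∀ x : ℝ, Complex.exp (2 * μ * x) * (um x * up x) = 1 := by
    intro x
    simp only [up, um]; rw [← Complex.exp_add, ← Complex.exp_add, Complex.exp_eq_one_iff]
    exact ⟨0, by push_cast; ring⟩
  have hA : A * (1 + β) * w = w + β * μ := by simp only [A]; field_simp
  have hF : F * (1 - β) * w = w + β * μ := by simp only [F]; field_simp
  refine ⟨?_, ?_, ?_⟩
  · refine Continuous.continuousAt ?_
    refine Continuous.if_le cum (by fun_prop) continuous_id continuous_const ?_
    rintro x rfl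
    simp only [B, id]
    linear_combination (A - 1) * e1
  · refine Continuous.continuousAt ?_
    refine Continuous.if_le (by fun_prop) cup continuous_id continuous_const ?_
    rintro x rfl
    simp only [E, id]
    linear_combination (1 - F) * e2
  · intro x hx
    rcases lt_or_gt_of_ne hx with hlt | hgt
    · refine ⟨(-(μ : ℂ) + w) * um x,
        E * ((-(μ : ℂ) + w) * um x) + F * ((-(μ : ℂ) - w) * up x), ?_, ?_, ?_⟩
      · refine (dum x).congr_of_eventuallyEq ?_
        filter_upwards [eventually_lt_nhds hlt] with y hy
        simp only [Um, if_pos hy.le]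
      · refine (((dum x).const_mul E).add ((dup x).const_mul F)).congr_of_eventuallyEq ?_
        filter_upwards [eventually_lt_nhds hlt] with y hy
        simp only [Up, if_pos hy.le, Pi.add_apply]
      · simp only [h, k, Um, Up, if_pos hlt, if_pos hlt.le]
        push_cast
        linear_combination (-(F * (1 - β) * w)) * key x - hF
    · refine ⟨A * ((-(μ : ℂ) + w) * um x) + B * ((-(μ : ℂ) - w) * up x),
        (-(μ : ℂ) - w) * up x, ?_, ?_, ?_⟩
      · refine (((dum x).const_mul A).add ((dup x).const_mul B)).congr_of_eventuallyEq ?_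
        filter_upwards [eventually_gt_nhds hgt] with y hy
        simp only [Um, if_neg (not_le.2 hy), Pi.add_apply]
      · refine (dup x).congr_of_eventuallyEq ?_
        filter_upwards [eventually_gt_nhds hgt] with y hy
        simp only [Up, if_neg (not_le.2 hy)]
      · simp only [h, k, Um, Up, if_neg (not_lt.2 hgt.le), if_neg (not_le.2 hgt)]
        push_cast
        linear_combination (-(A * (1 + β) * w)) * key x - hA
end

section
/- Let t > 0, x, y ∈ ℝ, and let ℓ : ℝ → [0,∞) be any function with ℓ(u) → 0 as |u| → ∞. Then lim_{|u|→∞} ∫_0^{ℓ(u)} exp((v+iu)² t/2) · exp(−(v+iu)|x−y|) · (Σ_{j=1}^4 c_j(y) e^{−(v+iu) a_j(x,y)}) / (β1 β2 e^{−2(v+iu) z} + 1) dv = 0. (This is the statement that the integral of ξ ↦ e^{ξ²t/2} Ḡ(x,y;ξ) over the horizontal segment ρ_M from (0,u) to (ℓ(u),u) tends to 0, allowing the contour φ(Γ) to be deformed to the imaginary axis.) -/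
open Complex MeasureTheory

/-- The coefficients c_j(y) for the (β1,β2)-SBM. -/
noncomputable def cSBM (z1 z2 β1 β2 y : ℝ) : Fin 4 → ℝ :=
  ![1,
    (2 * (if z1 ≤ y then (1 : ℝ) else 0) - 1) * β1,
    (2 * (if z2 ≤ y then (1 : ℝ) else 0) - 1) * β2,
    (1 - 2 * (if z1 ≤ y ∧ y < z2 then (1 : ℝ) else 0)) * (β1 * β2)]

/-- The exponents a_j(x,y) for the (β1,β2)-SBM. -/
noncomputable def aSBM (z1 z2 x y : ℝ) : Fin 4 → ℝ :=
  ![0,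
    |y - z1| + |x - z1| - |y - x|,
    |y - z2| + |x - z2| - |y - x|,
    2 * max (z2 - max x (max y z1)) 0 + 2 * max (min x (min y z2) - z1) 0]

/-- the integral of ξ ↦ e^{ξ²t/2} Ḡ(x,y;ξ) over the horizontal segment
ρ_M from (0,u) to (ℓ(u),u) tends to 0 as |u| → ∞. -/
theorem segment_integral_tendsto_zero
    (z1 z2 : ℝ) (hz : z1 < z2) (β1 β2 : ℝ)
    (hβ1 : β1 ∈ Set.Ioo (-1 : ℝ) 1) (hβ2 : β2 ∈ Set.Ioo (-1 : ℝ) 1)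
    (t : ℝ) (ht : 0 < t) (x y : ℝ)
    (ℓ : ℝ → ℝ) (hℓ0 : ∀ u, 0 ≤ ℓ u)
    (hℓ : Filter.Tendsto ℓ (Filter.comap (fun u : ℝ => |u|) Filter.atTop) (nhds 0)) :
    Filter.Tendsto
      (fun u : ℝ =>
        ∫ v in (0 : ℝ)..(ℓ u),
          Complex.exp (((v : ℂ) + u * Complex.I) ^ 2 * t / 2) *
            Complex.exp (-((v : ℂ) + u * Complex.I) * |x - y|) *
            (∑ j : Fin 4, (cSBM z1 z2 β1 β2 y j : ℂ) *
              Complex.exp (-((v : ℂ) + u * Complex.I) * (aSBM z1 z2 x y j))) /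
            ((β1 * β2 : ℂ) * Complex.exp (-2 * ((v : ℂ) + u * Complex.I) * (z2 - z1)) + 1))
      (Filter.comap (fun u : ℝ => |u|) Filter.atTop) (nhds 0) := by
  have hb : |β1 * β2| < 1 := by
    rw [abs_mul]
    have h1 := abs_lt.2 hβ1
    have h2 := abs_lt.2 hβ2
    nlinarith [abs_nonneg β1, abs_nonneg β2]
  have hd : 0 < 1 - |β1 * β2| := by linarith
  have hexp : ∀ (u v r : ℝ), 0 ≤ v → v ≤ 1 →
      ‖Complex.exp (-((v : ℂ) + u * Complex.I) * (r : ℂ))‖ ≤ Real.exp |r| := by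
    intro u v r h0 h1
    rw [Complex.norm_exp]
    apply Real.exp_le_exp.2
    have : (-((v : ℂ) + u * Complex.I) * (r : ℂ)).re = - (v * r) := by simp
    rw [this]
    nlinarith [neg_abs_le r, abs_nonneg r]
  have hbound : ∀ (u v : ℝ), 0 ≤ v → v ≤ 1 →
      ‖Complex.exp (((v : ℂ) + u * Complex.I) ^ 2 * t / 2) *
            Complex.exp (-((v : ℂ) + u * Complex.I) * |x - y|) *
            (∑ j : Fin 4, (cSBM z1 z2 β1 β2 y j : ℂ) *
              Complex.exp (-((v : ℂ) + u * Complex.I) * (aSBM z1 z2 x y j))) /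
            ((β1 * β2 : ℂ) * Complex.exp (-2 * ((v : ℂ) + u * Complex.I) * (z2 - z1)) + 1)‖ ≤
      Real.exp (t / 2) * Real.exp |(|x - y|)| *
        (∑ j : Fin 4, |cSBM z1 z2 β1 β2 y j| * Real.exp |aSBM z1 z2 x y j|) /
          (1 - |β1 * β2|) := by
    intro u v h0 h1
    rw [norm_div, norm_mul, norm_mul]
    have e1 : ‖Complex.exp (((v : ℂ) + u * Complex.I) ^ 2 * t / 2)‖ ≤ Real.exp (t / 2) := by
      rw [Complex.norm_exp]
      apply Real.exp_le_exp.2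
      have : (((v : ℂ) + u * Complex.I) ^ 2 * t / 2) = (((v ^ 2 - u ^ 2) * t / 2 : ℝ) : ℂ) +
          ((u * v * t : ℝ) : ℂ) * Complex.I := by
        push_cast
        ring_nf
        simp only [Complex.I_sq]
        ring
      rw [this]
      simp only [Complex.add_re, Complex.ofReal_re, Complex.re_ofReal_mul, Complex.I_re,
        mul_zero, add_zero]
      have : v ^ 2 - u ^ 2 ≤ 1 := by nlinarith [sq_nonneg u]
      nlinarith
    have e3 : ‖∑ j : Fin 4, (cSBM z1 z2 β1 β2 y j : ℂ) *
              Complex.exp (-((v : ℂ) + u * Complex.I) * (aSBM z1 z2 x y j))‖ ≤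
        ∑ j : Fin 4, |cSBM z1 z2 β1 β2 y j| * Real.exp |aSBM z1 z2 x y j| := by
      refine (norm_sum_le _ _).trans (Finset.sum_le_sum fun j _ => ?_)
      rw [norm_mul, Complex.norm_real, Real.norm_eq_abs]
      exact mul_le_mul_of_nonneg_left (hexp u v _ h0 h1) (abs_nonneg _)
    have e4 : 1 - |β1 * β2| ≤
        ‖(β1 * β2 : ℂ) * Complex.exp (-2 * ((v : ℂ) + u * Complex.I) * (z2 - z1)) + 1‖ := by
      have h2 : ‖(β1 * β2 : ℂ) * Complex.exp (-2 * ((v : ℂ) + u * Complex.I) * (z2 - z1))‖ ≤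
          |β1 * β2| := by
        rw [norm_mul, ← Complex.ofReal_mul, Complex.norm_real, Real.norm_eq_abs]
        refine mul_le_of_le_one_right (abs_nonneg _) ?_
        rw [Complex.norm_exp]
        apply Real.exp_le_one_iff.2
        have : (-2 * ((v : ℂ) + u * Complex.I) * (z2 - z1)).re = -(2 * v * (z2 - z1)) := by
          simp
        rw [this]
        have : 0 ≤ v * (z2 - z1) := mul_nonneg h0 (by linarith)
        linarith
      have h3 := norm_sub_le_norm_add (1 : ℂ)
        ((β1 * β2 : ℂ) * Complex.exp (-2 * ((v : ℂ) + u * Complex.I) * (z2 - z1)))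
      rw [norm_one, add_comm (1 : ℂ)] at h3
      linarith
    have e2 := hexp u v |x - y| h0 h1
    gcongr
  have hev : ∀ᶠ u in Filter.comap (fun u : ℝ => |u|) Filter.atTop, ℓ u ≤ 1 :=
    (hℓ.eventually_lt_const one_pos).mono fun u h => h.le
  have hlim := hℓ.const_mul (Real.exp (t / 2) * Real.exp |(|x - y|)| *
        (∑ j : Fin 4, |cSBM z1 z2 β1 β2 y j| * Real.exp |aSBM z1 z2 x y j|) /
          (1 - |β1 * β2|))
  rw [mul_zero] at hlim
  refine squeeze_zero_norm' ?_ hlim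
  filter_upwards [hev] with u hu
  refine (intervalIntegral.norm_integral_le_of_norm_le_const fun v hv => ?_).trans
    (le_of_eq (by rw [sub_zero, abs_of_nonneg (hℓ0 u)]))
  rw [Set.uIoc_of_le (hℓ0 u)] at hv
  exact hbound u v hv.1.le (hv.2.trans hu)
end

section
/- (Transition density of the (β1,β2)-skew Brownian motion without drift.) For every t > 0 and x, y ∈ ℝ, (1/2π) ∫_ℝ e^{−w²t/2} e^{−iw|x−y|} (Σ_{j=1}^4 c_j(y) e^{−iw a_j(x,y)}) / (β1 β2 e^{−2iwz} + 1) dw = (2πt)^{−1/2} e^{−(x−y)²/(2t)} Σ_{k=0}^∞ (−β1β2)^k Σ_{j=1}^4 c_j(y) exp(−(a_j(x,y) + 2zk)²/(2t)) · exp(−|x−y|(a_j(x,y) + 2zk)/t), where both the integral and the double series converge absolutely. In other words, the transition density p^{(β1,β2)}(t,x,y) of the (β1,β2)-SBM, given by the left-hand integral, equals p^{(0,0)}(t,x,y) Σ_{k=0}^∞ (−β1β2)^k Σ_{j=1}^4 c_j(y) e^{−(a_j+2zk)²/(2t)} e^{−|x−y|(a_j+2zk)/t}, with p^{(0,0)}(t,x,y)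 = (2πt)^{−1/2} e^{−(x−y)²/(2t)} the Brownian transition density. -/
open Complex MeasureTheory

theorem sbm_gauss_integrable (t : ℝ) (ht : 0 < t) (s : ℝ) :
    Integrable (fun w : ℝ => Complex.exp (-(w : ℂ) ^ 2 * t / 2) * Complex.exp (-Complex.I * w * s)) := by
  have h := integrable_cexp_quadratic (b := ((t / 2 : ℝ) : ℂ)) (by rw [ofReal_re]; positivity)
    (-Complex.I * s) 0
  refine h.congr (Filter.Eventually.of_forall fun w => ?_)
  simp only
  rw [← Complex.exp_add]
  congr 1
  push_cast
  ring

theorem sbm_gauss_integral (t : ℝ) (ht : 0 < t) (s : ℝ) :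
    ∫ w : ℝ, Complex.exp (-(w : ℂ) ^ 2 * t / 2) * Complex.exp (-Complex.I * w * s) =
      ((2 * Real.pi * (Real.sqrt (2 * Real.pi * t))⁻¹ * Real.exp (-s ^ 2 / (2 * t)) : ℝ) : ℂ) := by
  have h := fourierIntegral_gaussian (b := ((t / 2 : ℝ) : ℂ)) (by rw [ofReal_re]; positivity)
    (-(s : ℂ))
  have e : (fun w : ℝ => Complex.exp (-(w : ℂ) ^ 2 * t / 2) * Complex.exp (-Complex.I * w * s)) =
      fun w : ℝ => cexp (I * (-(s : ℂ)) * w) * cexp (-((t / 2 : ℝ) : ℂ) * w ^ 2) := by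
    funext w
    rw [← Complex.exp_add, ← Complex.exp_add]
    congr 1
    push_cast
    ring
  rw [e, h]
  have hp := Real.pi_pos
  have e1 : ((Real.pi : ℂ) / ((t / 2 : ℝ) : ℂ)) ^ (1 / 2 : ℂ) =
      ((2 * Real.pi * (Real.sqrt (2 * Real.pi * t))⁻¹ : ℝ) : ℂ) := by
    have e2 : ((Real.pi / (t / 2)) ^ (1 / 2 : ℝ) : ℝ) = 2 * Real.pi * (Real.sqrt (2 * Real.pi * t))⁻¹ := by
      rw [← Real.sqrt_eq_rpow, Real.sqrt_eq_iff_mul_self_eq (by positivity) (by positivity)]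
      have := Real.mul_self_sqrt (show 0 ≤ 2 * Real.pi * t by positivity)
      have h3 : (2 * Real.pi * (Real.sqrt (2 * Real.pi * t))⁻¹) * (2 * Real.pi * (Real.sqrt (2 * Real.pi * t))⁻¹)
        = (2 * Real.pi) ^ 2 * (Real.sqrt (2 * Real.pi * t) * Real.sqrt (2 * Real.pi * t))⁻¹ := by
        rw [mul_inv]; ring
      rw [h3, this]
      field_simp
    rw [← e2, Complex.ofReal_cpow (by positivity)]
    push_cast
    rfl
  rw [e1]
  push_cast
  congr 2
  have : (t : ℂ) ≠ 0 := by exact_mod_cast ht.ne'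
  field_simp
  try ring

theorem sbm_general (c a : Fin 4 → ℝ) (d b z t : ℝ) (ht : 0 < t) (hb : |b| < 1) :
    Integrable (fun w : ℝ =>
        Complex.exp (-(w : ℂ) ^ 2 * t / 2) * Complex.exp (-Complex.I * w * d) *
          (∑ j : Fin 4, (c j : ℂ) * Complex.exp (-Complex.I * w * (a j))) /
          ((b : ℂ) * Complex.exp (-2 * Complex.I * w * z) + 1)) ∧
    Summable (fun k : ℕ => |(-b) ^ k| *
        ∑ j : Fin 4, |c j| * Real.exp (-(a j + 2 * z * k) ^ 2 / (2 * t)) *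
          Real.exp (-d * (a j + 2 * z * k) / t)) ∧
    (1 / (2 * Real.pi) : ℂ) *
        (∫ w : ℝ,
          Complex.exp (-(w : ℂ) ^ 2 * t / 2) * Complex.exp (-Complex.I * w * d) *
            (∑ j : Fin 4, (c j : ℂ) * Complex.exp (-Complex.I * w * (a j))) /
            ((b : ℂ) * Complex.exp (-2 * Complex.I * w * z) + 1)) =
      (((Real.sqrt (2 * Real.pi * t))⁻¹ * Real.exp (-d ^ 2 / (2 * t)) *
        ∑' k : ℕ, (-b) ^ k *
          ∑ j : Fin 4, c j * Real.exp (-(a j + 2 * z * k) ^ 2 / (2 * t)) *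
            Real.exp (-d * (a j + 2 * z * k) / t) : ℝ) : ℂ) := by
  set G : ℝ → ℂ := fun w => Complex.exp (-(w : ℂ) ^ 2 * t / 2) * Complex.exp (-Complex.I * w * d) *
            (∑ j : Fin 4, (c j : ℂ) * Complex.exp (-Complex.I * w * (a j))) with hG
  set q : ℝ → ℂ := fun w => -((b : ℂ) * Complex.exp (-2 * Complex.I * w * z)) with hq
  have hqn : ∀ w, ‖q w‖ = |b| := by
    intro w
    have : (-2 * Complex.I * w * z : ℂ) = ((-2 * w * z : ℝ) : ℂ) * Complex.I := by push_cast; ring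
    simp only [hq]
    rw [norm_neg, norm_mul, this, Complex.norm_exp_ofReal_mul_I, mul_one, Complex.norm_real,
      Real.norm_eq_abs]
  have hqc : Continuous q := by fun_prop
  have hden : ∀ w : ℝ, ((b : ℂ) * Complex.exp (-2 * Complex.I * w * z) + 1) = 1 - q w := by
    intro w; simp only [hq]; ring
  have hFk : ∀ (k : ℕ) (w : ℝ), G w * q w ^ k = ∑ j : Fin 4, (((-b) ^ k * c j : ℝ) : ℂ) *
      (Complex.exp (-(w : ℂ) ^ 2 * t / 2) *
        Complex.exp (-Complex.I * w * ((d + (a j + 2 * z * k) : ℝ) : ℂ))) := by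
    intro k w
    simp only [hG, hq]
    rw [← neg_mul, mul_pow, ← Complex.exp_nat_mul, Finset.mul_sum, Finset.sum_mul]
    refine Finset.sum_congr rfl fun j _ => ?_
    have : Complex.exp (-Complex.I * w * ((d + (a j + 2 * z * k) : ℝ) : ℂ)) =
        Complex.exp (-Complex.I * w * d) * Complex.exp (-Complex.I * w * (a j)) *
          Complex.exp (k * (-2 * Complex.I * w * z)) := by
      rw [← Complex.exp_add, ← Complex.exp_add]
      congr 1
      push_cast
      ring
    rw [this]
    push_cast
    ring
  have hFint : ∀ k : ℕ, Integrable (fun w => G w * q w ^ k) := by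
    intro k
    simp only [hFk]
    exact integrable_finsetSum _ fun j _ => (sbm_gauss_integrable t ht _).const_mul _
  have hGint : Integrable G := by simpa using hFint 0
  have hne : ∀ w, 1 - q w ≠ 0 := by
    intro w h
    have h1 : q w = 1 := (sub_eq_zero.mp h).symm
    have := hqn w
    rw [h1, norm_one] at this
    linarith
  have hbd : ∀ w, ‖(1 - q w)⁻¹‖ ≤ (1 - |b|)⁻¹ := by
    intro w
    rw [norm_inv]
    apply inv_anti₀ (by linarith)
    have := norm_sub_norm_le (1 : ℂ) (q w)
    rw [norm_one, hqn] at this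
    exact this
  have hFsum : ∀ w, ∑' k : ℕ, G w * q w ^ k = G w / (1 - q w) := by
    intro w
    rw [tsum_mul_left, tsum_geometric_of_norm_lt_one (by rw [hqn]; exact hb), div_eq_mul_inv]
  have hE : ∀ A : ℝ, Real.exp (-A ^ 2 / (2 * t)) * Real.exp (-d * A / t) =
      Real.exp (d ^ 2 / (2 * t)) * Real.exp (-(d + A) ^ 2 / (2 * t)) := by
    intro A
    rw [← Real.exp_add, ← Real.exp_add]
    congr 1
    field_simp
    ring
  refine ⟨?_, ?_, ?_⟩
  · simp only [hden]
    have := hGint.mul_bdd (c := (1 - |b|)⁻¹) (g := fun w => (1 - q w)⁻¹)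
      (((continuous_const.sub hqc).inv₀ hne).aestronglyMeasurable)
      (Filter.Eventually.of_forall hbd)
    refine this.congr (Filter.Eventually.of_forall fun w => ?_)
    exact (div_eq_mul_inv (G w) (1 - q w)).symm
  · have hs : Summable (fun k : ℕ => |b| ^ k * ∑ j : Fin 4, |c j| * Real.exp (d ^ 2 / (2 * t))) :=
      (summable_geometric_of_lt_one (abs_nonneg b) hb).mul_right _
    refine Summable.of_nonneg_of_le (fun k => by positivity) (fun k => ?_) hs
    rw [abs_pow, abs_neg]
    refine mul_le_mul_of_nonneg_left (Finset.sum_le_sum fun j _ => ?_) (by positivity)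
    rw [mul_assoc, hE]
    refine mul_le_mul_of_nonneg_left ?_ (abs_nonneg _)
    refine mul_le_of_le_one_right (Real.exp_pos _).le (Real.exp_le_one_iff.mpr ?_)
    exact div_nonpos_of_nonpos_of_nonneg (neg_nonpos.mpr (sq_nonneg _)) (by positivity)
  · simp only [hden]
    have hsn : Summable fun k : ℕ => ∫ w, ‖G w * q w ^ k‖ := by
      simp only [norm_mul, norm_pow, hqn, integral_mul_const]
      exact (summable_geometric_of_lt_one (abs_nonneg b) hb).mul_left _
    have H := (hasSum_integral_of_summable_integral_norm hFint hsn).tsum_eq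
    simp only [hFsum] at H
    rw [← H, ← tsum_mul_left, ← tsum_mul_left, Complex.ofReal_tsum]
    refine tsum_congr fun k => ?_
    simp only [hFk]
    rw [integral_finsetSum _ fun j _ => (sbm_gauss_integrable t ht _).const_mul _]
    simp only [integral_const_mul, sbm_gauss_integral t ht]
    have hp : (1 / (2 * Real.pi) : ℂ) = ((1 / (2 * Real.pi) : ℝ) : ℂ) := by push_cast; rfl
    rw [hp]
    simp only [← Complex.ofReal_mul, ← Complex.ofReal_sum]
    congr 1
    rw [Finset.mul_sum, Finset.mul_sum, Finset.mul_sum]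
    refine Finset.sum_congr rfl fun j _ => ?_
    rw [mul_assoc (c j), hE]
    have h1 : Real.exp (-d ^ 2 / (2 * t)) * Real.exp (d ^ 2 / (2 * t)) = 1 := by
      rw [← Real.exp_add, neg_div, neg_add_cancel, Real.exp_zero]
    have hpi : (1 / (2 * Real.pi)) * (2 * Real.pi) = 1 := by
      have := Real.pi_pos
      field_simp
    linear_combination ((-b) ^ k * c j * (Real.sqrt (2 * Real.pi * t))⁻¹ *
      Real.exp (-(d + (a j + 2 * z * k)) ^ 2 / (2 * t))) * (hpi - h1)

/-- the transition density of the (β1,β2)-SBM without drift: the contour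
integral representation equals the Gaussian series expansion, with absolute convergence
of both the integral and the double series. -/
theorem transition_density_two_barriers_no_drift
    (z1 z2 : ℝ) (hz : z1 < z2) (β1 β2 : ℝ)
    (hβ1 : β1 ∈ Set.Ioo (-1 : ℝ) 1) (hβ2 : β2 ∈ Set.Ioo (-1 : ℝ) 1)
    (t : ℝ) (ht : 0 < t) (x y : ℝ) :
    Integrable (fun w : ℝ =>
        Complex.exp (-(w : ℂ) ^ 2 * t / 2) * Complex.exp (-Complex.I * w * |x - y|) *
          (∑ j : Fin 4, (cSBM z1 z2 β1 β2 y j : ℂ) *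
            Complex.exp (-Complex.I * w * (aSBM z1 z2 x y j))) /
          ((β1 * β2 : ℂ) * Complex.exp (-2 * Complex.I * w * (z2 - z1)) + 1)) ∧
    Summable (fun k : ℕ => |(-(β1 * β2)) ^ k| *
        ∑ j : Fin 4, |cSBM z1 z2 β1 β2 y j| *
          Real.exp (-(aSBM z1 z2 x y j + 2 * (z2 - z1) * k) ^ 2 / (2 * t)) *
          Real.exp (-|x - y| * (aSBM z1 z2 x y j + 2 * (z2 - z1) * k) / t)) ∧
    (1 / (2 * Real.pi) : ℂ) *
        (∫ w : ℝ,
          Complex.exp (-(w : ℂ) ^ 2 * t / 2) * Complex.exp (-Complex.I * w * |x - y|) *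
            (∑ j : Fin 4, (cSBM z1 z2 β1 β2 y j : ℂ) *
              Complex.exp (-Complex.I * w * (aSBM z1 z2 x y j))) /
            ((β1 * β2 : ℂ) * Complex.exp (-2 * Complex.I * w * (z2 - z1)) + 1)) =
      (((Real.sqrt (2 * Real.pi * t))⁻¹ * Real.exp (-(x - y) ^ 2 / (2 * t)) *
        ∑' k : ℕ, (-(β1 * β2)) ^ k *
          ∑ j : Fin 4, cSBM z1 z2 β1 β2 y j *
            Real.exp (-(aSBM z1 z2 x y j + 2 * (z2 - z1) * k) ^ 2 / (2 * t)) *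
            Real.exp (-|x - y| * (aSBM z1 z2 x y j + 2 * (z2 - z1) * k) / t) : ℝ) : ℂ) := by
  have hb : |β1 * β2| < 1 := by
    rw [abs_mul]
    have h1 := abs_lt.mpr hβ1
    have h2 := abs_lt.mpr hβ2
    exact mul_lt_one_of_nonneg_of_lt_one_left (abs_nonneg _) h1 h2.le
  have h := sbm_general (cSBM z1 z2 β1 β2 y) (aSBM z1 z2 x y) |x - y| (β1 * β2) (z2 - z1) t ht hb
  rw [sq_abs] at h
  simpa only [Complex.ofReal_mul β1 β2, Complex.ofReal_sub z2 z1] using h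
end

section
/- For every t > 0, all x, y ∈ ℝ, and every N ∈ ℕ, the tail R^N v^{(β1,β2)}(t,x,y) = Σ_{k=N+1}^∞ (−β1β2)^k Σ_{j=1}^4 c_j(y) exp(−(a_j(x,y)+2zk)²/(2t)) exp(−|x−y|(a_j(x,y)+2zk)/t) of the series v^{(β1,β2)} satisfies the uniform bound |R^N v^{(β1,β2)}(t,x,y)| ≤ v̄ |β1β2|^{N+1}, where v̄ = (1+|β1|)(1+|β2|)/(1−|β1β2|). -/
open Complex MeasureTheory

lemma aSBM_nonneg (z1 z2 x y : ℝ) (j : Fin 4) : 0 ≤ aSBM z1 z2 x y j := by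
  fin_cases j
  · simp [aSBM]
  · have := abs_sub_le y z1 x
    rw [abs_sub_comm z1 x] at this
    simp [aSBM]; linarith
  · have := abs_sub_le y z2 x
    rw [abs_sub_comm z2 x] at this
    simp [aSBM]; linarith
  · have h1 := le_max_right (z2 - max x (max y z1)) 0
    have h2 := le_max_right (min x (min y z2) - z1) 0
    change 0 ≤ 2 * max (z2 - max x (max y z1)) 0 + 2 * max (min x (min y z2) - z1) 0
    linarith

lemma cSBM_abs_sum (z1 z2 β1 β2 y : ℝ) :
    ∑ j : Fin 4, |cSBM z1 z2 β1 β2 y j| = (1 + |β1|) * (1 + |β2|) := by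
  have e1 : |(2 * (if z1 ≤ y then (1 : ℝ) else 0) - 1)| = 1 := by split_ifs <;> norm_num
  have e2 : |(2 * (if z2 ≤ y then (1 : ℝ) else 0) - 1)| = 1 := by split_ifs <;> norm_num
  have e3 : |(1 - 2 * (if z1 ≤ y ∧ y < z2 then (1 : ℝ) else 0))| = 1 := by
    split_ifs <;> norm_num
  rw [Fin.sum_univ_four]
  change |(1 : ℝ)| + |(2 * (if z1 ≤ y then (1 : ℝ) else 0) - 1) * β1| +
    |(2 * (if z2 ≤ y then (1 : ℝ) else 0) - 1) * β2| +
    |(1 - 2 * (if z1 ≤ y ∧ y < z2 then (1 : ℝ) else 0)) * (β1 * β2)| = _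
  rw [abs_mul, abs_mul, abs_mul, e1, e2, e3, abs_mul, abs_one]
  ring

/-- the tail of the series v^{(β1,β2)}(t,x,y) truncated at the first N+1
terms is bounded, uniformly in x and y, by v̄ |β1 β2|^{N+1}. -/
theorem series_v_tail_bound
    (z1 z2 : ℝ) (hz : z1 < z2) (β1 β2 : ℝ)
    (hβ1 : β1 ∈ Set.Ioo (-1 : ℝ) 1) (hβ2 : β2 ∈ Set.Ioo (-1 : ℝ) 1)
    (t : ℝ) (ht : 0 < t) (x y : ℝ) (N : ℕ) :
    |∑' k : ℕ, (-(β1 * β2)) ^ (N + 1 + k) *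
        ∑ j : Fin 4, cSBM z1 z2 β1 β2 y j *
          Real.exp (-(aSBM z1 z2 x y j + 2 * (z2 - z1) * (N + 1 + k)) ^ 2 / (2 * t)) *
          Real.exp (-|x - y| * (aSBM z1 z2 x y j + 2 * (z2 - z1) * (N + 1 + k)) / t)| ≤
      (1 + |β1|) * (1 + |β2|) / (1 - |β1 * β2|) * |β1 * β2| ^ (N + 1) := by
  have hq : |β1 * β2| < 1 := by
    rw [abs_mul]
    have h1 : |β1| < 1 := abs_lt.2 hβ1
    have h2 : |β2| < 1 := abs_lt.2 hβ2
    exact mul_lt_one_of_nonneg_of_lt_one_left (abs_nonneg _) h1 h2.le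
  have hs := (hasSum_geometric_of_lt_one (abs_nonneg (β1 * β2)) hq).mul_left
    (|β1 * β2| ^ (N + 1) * ((1 + |β1|) * (1 + |β2|)))
  rw [← Real.norm_eq_abs]
  refine (tsum_of_norm_bounded hs ?_).trans (le_of_eq (by rw [div_eq_mul_inv]; ring))
  intro k
  have hb : |∑ j : Fin 4, cSBM z1 z2 β1 β2 y j *
          Real.exp (-(aSBM z1 z2 x y j + 2 * (z2 - z1) * (N + 1 + k)) ^ 2 / (2 * t)) *
          Real.exp (-|x - y| * (aSBM z1 z2 x y j + 2 * (z2 - z1) * (N + 1 + k)) / t)|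
      ≤ (1 + |β1|) * (1 + |β2|) := by
    rw [← cSBM_abs_sum z1 z2 β1 β2 y]
    refine (Finset.abs_sum_le_sum_abs _ _).trans (Finset.sum_le_sum fun j _ => ?_)
    have hA : 0 ≤ aSBM z1 z2 x y j + 2 * (z2 - z1) * ((N : ℝ) + 1 + k) := by
      have := aSBM_nonneg z1 z2 x y j
      have h3 : 0 < z2 - z1 := sub_pos.2 hz
      positivity
    have x1 : Real.exp (-(aSBM z1 z2 x y j + 2 * (z2 - z1) * (N + 1 + k)) ^ 2 / (2 * t)) ≤ 1 := by
      rw [Real.exp_le_one_iff]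
      exact div_nonpos_of_nonpos_of_nonneg (neg_nonpos.2 (sq_nonneg _)) (by positivity)
    have x2 : Real.exp (-|x - y| * (aSBM z1 z2 x y j + 2 * (z2 - z1) * (N + 1 + k)) / t) ≤ 1 := by
      rw [Real.exp_le_one_iff]
      exact div_nonpos_of_nonpos_of_nonneg
        (mul_nonpos_of_nonpos_of_nonneg (neg_nonpos.2 (abs_nonneg _)) hA) ht.le
    rw [abs_mul, abs_mul, Real.abs_exp, Real.abs_exp, mul_assoc]
    exact mul_le_of_le_one_right (abs_nonneg _)
      (mul_le_one₀ x1 (Real.exp_pos _).le x2)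
  rw [Real.norm_eq_abs, abs_mul, abs_pow, abs_neg, pow_add]
  calc _ ≤ |β1 * β2| ^ (N + 1) * |β1 * β2| ^ k * ((1 + |β1|) * (1 + |β2|)) :=
        mul_le_mul_of_nonneg_left hb (by positivity)
    _ = _ := by ring
end

section
/- Let A ∈ ℝ, A ≠ 0, and t > 0. Then for every ω ∈ ℝ the convolution of w ↦ e^{Aw} 1_{ℝ⁻}(Aw) with the Gaussian w ↦ e^{−w²/(2t)} satisfies ∫_ℝ e^{As} 1_{ℝ⁻}(As) e^{−(ω−s)²/(2t)} ds = √t · e^{A²t/2 + Aω} · √(2π) · ( 1_{ℝ⁻}(A) + sgn(A) · Φ^c(ω/√t + A√t) ), where sgn(A) = 2·1_{ℝ⁺}(A) − 1. -/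
open MeasureTheory

/-- The Gaussian tail function Φᶜ(y) = (2π)^{-1/2} ∫_y^∞ e^{-u²/2} du. -/
noncomputable def gaussTail (y : ℝ) : ℝ :=
  (Real.sqrt (2 * Real.pi))⁻¹ * ∫ u in Set.Ioi y, Real.exp (-u ^ 2 / 2)

/-- convolution of the truncated exponential with a Gaussian. -/
theorem convolution_truncated_exp_gaussian
    (A : ℝ) (hA : A ≠ 0) (t : ℝ) (ht : 0 < t) (ω : ℝ) :
    (∫ s : ℝ, Real.exp (A * s) * (if A * s < 0 then (1 : ℝ) else 0) *
        Real.exp (-(ω - s) ^ 2 / (2 * t))) =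
      Real.sqrt t * Real.exp (A ^ 2 * t / 2 + A * ω) * Real.sqrt (2 * Real.pi) *
        ((if A < 0 then (1 : ℝ) else 0) +
          (2 * (if 0 < A then (1 : ℝ) else 0) - 1) *
            gaussTail (ω / Real.sqrt t + A * Real.sqrt t)) := by
  obtain ⟨r, hr, rfl⟩ : ∃ r : ℝ, 0 < r ∧ t = r ^ 2 :=
    ⟨Real.sqrt t, Real.sqrt_pos.2 ht, (Real.sq_sqrt ht.le).symm⟩
  rw [Real.sqrt_sq hr.le]
  set c : ℝ := ω / r + A * r with hc
  have hpi : Real.sqrt (2 * Real.pi) ≠ 0 := by positivity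
  have hE : ∀ s : ℝ, Real.exp (A * s) * (if A * s < 0 then (1 : ℝ) else 0) *
        Real.exp (-(ω - s) ^ 2 / (2 * r ^ 2)) =
      (fun u : ℝ => Real.exp (A ^ 2 * r ^ 2 / 2 + A * ω) *
        ((if A * (c - u) < 0 then (1 : ℝ) else 0) * Real.exp (-u ^ 2 / 2))) (c - s / r) := by
    intro s
    have h1 : (A * (c - (c - s / r)) < 0) ↔ A * s < 0 := by
      have : A * (c - (c - s / r)) = A * s / r := by ring
      rw [this, div_lt_iff₀ hr, zero_mul]
    simp only [h1]
    have h2 : Real.exp (A * s) * Real.exp (-(ω - s) ^ 2 / (2 * r ^ 2)) =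
        Real.exp (A ^ 2 * r ^ 2 / 2 + A * ω) * Real.exp (-(c - s / r) ^ 2 / 2) := by
      rw [← Real.exp_add, ← Real.exp_add, hc]
      congr 1
      field_simp
      ring
    split_ifs
    · linear_combination h2
    · simp
  simp_rw [hE]
  rw [Measure.integral_comp_div (fun x : ℝ => (fun u : ℝ => Real.exp (A ^ 2 * r ^ 2 / 2 + A * ω) *
        ((if A * (c - u) < 0 then (1 : ℝ) else 0) * Real.exp (-u ^ 2 / 2))) (c - x)) r,
    integral_sub_left_eq_self (fun u : ℝ => Real.exp (A ^ 2 * r ^ 2 / 2 + A * ω) *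
        ((if A * (c - u) < 0 then (1 : ℝ) else 0) * Real.exp (-u ^ 2 / 2))) volume c,
    integral_const_mul, abs_of_pos hr, smul_eq_mul]
  unfold gaussTail
  have key : (∫ u : ℝ, (if A * (c - u) < 0 then (1 : ℝ) else 0) * Real.exp (-u ^ 2 / 2)) =
      Real.sqrt (2 * Real.pi) * (if A < 0 then (1 : ℝ) else 0) +
          (2 * (if 0 < A then (1 : ℝ) else 0) - 1) *
            ∫ u in Set.Ioi c, Real.exp (-u ^ 2 / 2) := by
    rcases lt_or_gt_of_ne hA with h | h
    · have hfun : ∀ u : ℝ, -u ^ 2 / 2 = -(1 / 2) * u ^ 2 := fun u => by ring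
      have hint : Integrable (fun u : ℝ => Real.exp (-u ^ 2 / 2)) := by
        simp_rw [hfun]
        exact integrable_exp_neg_mul_sq (by norm_num)
      have htot : ∫ u : ℝ, Real.exp (-u ^ 2 / 2) = Real.sqrt (2 * Real.pi) := by
        simp_rw [hfun]
        rw [integral_gaussian]
        congr 1
        ring
      have hadd := integral_add_compl (measurableSet_Ioi (a := c)) hint
      rw [Set.compl_Ioi, integral_Iic_eq_integral_Iio, htot] at hadd
      have : (∫ u : ℝ, (if A * (c - u) < 0 then (1 : ℝ) else 0) * Real.exp (-u ^ 2 / 2)) =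
          ∫ u in Set.Iio c, Real.exp (-u ^ 2 / 2) := by
        rw [← integral_indicator measurableSet_Iio]
        congr 1
        ext u
        have h3 : A * (c - u) < 0 ↔ u < c := by
          rw [mul_neg_iff]
          constructor
          · rintro (⟨h1, h2⟩ | ⟨h1, h2⟩) <;> linarith
          · intro h1
            right
            constructor <;> linarith
        simp [Set.indicator_apply, h3]
      rw [this, if_pos h, if_neg h.not_gt]
      linarith
    · rw [if_neg h.not_gt, if_pos h, ← integral_indicator measurableSet_Ioi]
      have : (∫ u : ℝ, (if A * (c - u) < 0 then (1 : ℝ) else 0) * Real.exp (-u ^ 2 / 2)) =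
          ∫ u, (Set.Ioi c).indicator (fun u => Real.exp (-u ^ 2 / 2)) u := by
        congr 1
        ext u
        have h3 : A * (c - u) < 0 ↔ c < u := by
          rw [mul_neg_iff]
          constructor
          · rintro (⟨h1, h2⟩ | ⟨h1, h2⟩) <;> linarith
          · intro h1
            left
            constructor <;> linarith
        simp [Set.indicator_apply, h3]
      rw [this]
      ring
  rw [key]
  field_simp
end

section
/- Fix a barrier z1 ∈ ℝ, β ∈ (−1,1)∖{0}, μ ∈ ℝ∖{0}, t > 0, and y ∈ ℝ. Set s = 2·1_{[z1,∞)}(y) − 1 and c₂(μ,y; iw) = βs·iw − βμ. Then the function w ↦ e^{−w²t/2} c₂(μ,y; iw)/(iw + βμ) is integrable on ℝ and its Fourier transform equals, for every ω ∈ ℝ: F( e^{−w²t/2} c₂(μ,y;iw)/(iw+βμ) )(ω) = (βs/√t) e^{−ω²/(2t)} − (|βμ|/√t)(1 + βs) · ( e^{Aw} 1_{ℝ⁻}(Aw) ∗ e^{−w²/(2t)} )(ω) with A = βμ, where ∗ denotes convolution on ℝ. -/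
open Complex MeasureTheory

/-- The complex kernel. -/
noncomputable def c2ker (A : ℝ) (u : ℝ) : ℂ :=
  ((Real.exp (A * u) * (if A * u < 0 then (1 : ℝ) else 0) : ℝ) : ℂ)

lemma c2ker_eq_indicator_pos {A : ℝ} (hA : 0 < A) (w : ℝ) :
    (fun u : ℝ => c2ker A u * cexp (I * w * u)) =
      (Set.Iio (0 : ℝ)).indicator (fun u : ℝ => cexp ((I * w + A) * u)) := by
  funext u
  by_cases hu : u < 0
  · have : A * u < 0 := mul_neg_of_pos_of_neg hA hu
    simp only [c2ker, this, if_true, Set.indicator, Set.mem_Iio, hu]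
    push_cast
    rw [mul_one, ← Complex.exp_add]; congr 1; ring
  · have : ¬ A * u < 0 := not_lt.2 (mul_nonneg hA.le (not_lt.1 hu))
    simp [c2ker, this, Set.indicator, hu]

lemma c2ker_eq_indicator_neg {A : ℝ} (hA : A < 0) (w : ℝ) :
    (fun u : ℝ => c2ker A u * cexp (I * w * u)) =
      (Set.Ioi (0 : ℝ)).indicator (fun u : ℝ => cexp ((I * w + A) * u)) := by
  funext u
  by_cases hu : 0 < u
  · have : A * u < 0 := mul_neg_of_neg_of_pos hA hu
    simp only [c2ker, this, if_true, Set.indicator, Set.mem_Ioi, hu]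
    push_cast
    rw [mul_one, ← Complex.exp_add]; congr 1; ring
  · have : ¬ A * u < 0 := not_lt.2 (mul_nonneg_of_nonpos_of_nonpos hA.le (not_lt.1 hu))
    simp [c2ker, this, Set.indicator, hu]

lemma c2ker_integrable_aux {A : ℝ} (hA : A ≠ 0) (w : ℝ) :
    Integrable (fun u : ℝ => c2ker A u * cexp (I * w * u)) := by
  rcases lt_or_gt_of_ne hA with h | h
  · rw [c2ker_eq_indicator_neg h, integrable_indicator_iff measurableSet_Ioi]
    exact integrableOn_exp_mul_complex_Ioi (by simpa using h) 0
  · rw [c2ker_eq_indicator_pos h, integrable_indicator_iff measurableSet_Iio]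
    exact (integrableOn_exp_mul_complex_Iic (by simpa using h) 0).mono_set Set.Iio_subset_Iic_self

lemma c2ker_integrable {A : ℝ} (hA : A ≠ 0) : Integrable (c2ker A) := by
  simpa using c2ker_integrable_aux hA 0

lemma c2ker_integral {A : ℝ} (hA : A ≠ 0) (w : ℝ) :
    ((|A| : ℝ) : ℂ) * ∫ u : ℝ, c2ker A u * cexp (I * w * u) = A / (I * w + A) := by
  rcases lt_or_gt_of_ne hA with h | h
  · rw [c2ker_eq_indicator_neg h, integral_indicator measurableSet_Ioi,
      integral_exp_mul_complex_Ioi (by simpa using h) 0, abs_of_neg h]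
    simp
    ring
  · rw [c2ker_eq_indicator_pos h, integral_indicator measurableSet_Iio,
      ← integral_Iic_eq_integral_Iio,
      integral_exp_mul_complex_Iic (by simpa using h) 0, abs_of_pos h]
    simp
    ring

lemma c2_gauss_integrable {t : ℝ} (ht : 0 < t) :
    Integrable (fun w : ℝ => cexp (-(w : ℂ) ^ 2 * t / 2)) := by
  have h := integrable_cexp_neg_mul_sq (b := (t : ℂ) / 2) (by simpa using ht)
  refine h.congr (Filter.Eventually.of_forall fun w => ?_)
  simp only
  congr 1; ring

lemma c2_gauss_fourier {t : ℝ} (ht : 0 < t) (ω : ℝ) :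
    ((Real.sqrt (2 * Real.pi) : ℂ))⁻¹ *
      ∫ w : ℝ, cexp (-(w : ℂ) ^ 2 * t / 2) * cexp (-I * ω * w) =
      ((1 / Real.sqrt t * Real.exp (-ω ^ 2 / (2 * t)) : ℝ) : ℂ) := by
  have h := fourierIntegral_gaussian (b := (t : ℂ) / 2) (by simpa using ht) (-ω)
  have e : (∫ w : ℝ, cexp (-(w : ℂ) ^ 2 * t / 2) * cexp (-I * ω * w)) =
      ∫ x : ℝ, cexp (I * (-ω) * x) * cexp (-(t / 2 : ℂ) * x ^ 2) := by
    congr 1; funext w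
    rw [← Complex.exp_add, ← Complex.exp_add]; congr 1; ring
  rw [e, h]
  have h2 : ((Real.pi : ℂ) / (t / 2)) ^ (1 / 2 : ℂ) =
      ((Real.sqrt (2 * Real.pi) / Real.sqrt t : ℝ) : ℂ) := by
    rw [← Real.sqrt_div (by positivity), Real.sqrt_eq_rpow,
      Complex.ofReal_cpow (by positivity)]
    push_cast
    congr 1
    field_simp
  rw [h2]
  have h3 : (Real.sqrt (2 * Real.pi) : ℂ) ≠ 0 := by
    exact_mod_cast (Real.sqrt_pos.2 (by positivity)).ne'
  have ht' : (t : ℂ) ≠ 0 := by exact_mod_cast ht.ne'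
  have h4 : -(-(ω : ℂ)) ^ 2 / (4 * (t / 2)) = -ω ^ 2 / (2 * t) := by
    field_simp; ring
  rw [h4]
  push_cast
  field_simp

lemma c2_quot_ne {A : ℝ} (hA : A ≠ 0) (w : ℝ) : I * (w : ℂ) + A ≠ 0 := by
  intro h
  apply hA
  simpa using congrArg Complex.re h

lemma c2_quot_integrable {A : ℝ} (hA : A ≠ 0) {t : ℝ} (ht : 0 < t) :
    Integrable (fun w : ℝ => A / (I * (w : ℂ) + A) * cexp (-(w : ℂ) ^ 2 * t / 2)) := by
  refine (c2_gauss_integrable ht).bdd_mul (c := 1) ?_ (Filter.Eventually.of_forall fun w => ?_)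
  · have : Continuous fun w : ℝ => (A : ℂ) / (I * (w : ℂ) + A) :=
      continuous_const.div (by fun_prop) (c2_quot_ne hA)
    exact this.aestronglyMeasurable
  · rw [norm_div, div_le_one (norm_pos_iff.2 (c2_quot_ne hA w))]
    have := Complex.abs_re_le_norm (I * (w : ℂ) + A)
    simpa using this

lemma c2_osc_integrable {f : ℝ → ℂ} (hf : Integrable f) (ω : ℝ) :
    Integrable (fun w : ℝ => f w * cexp (-I * ω * w)) := by
  refine hf.mul_bdd (c := 1) (by fun_prop) (Filter.Eventually.of_forall fun w => ?_)
  have : -I * (ω : ℂ) * w = ((-ω * w : ℝ) : ℂ) * I := by push_cast; ring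
  rw [this, Complex.norm_exp_ofReal_mul_I]

lemma c2_swap {A : ℝ} (hA : A ≠ 0) {t : ℝ} (ht : 0 < t) (ω : ℝ) :
    ∫ w : ℝ, A / (I * (w : ℂ) + A) * cexp (-(w : ℂ) ^ 2 * t / 2) * cexp (-I * ω * w) =
    (|A| : ℝ) * ∫ u : ℝ, c2ker A u *
      ∫ w : ℝ, cexp (-(w : ℂ) ^ 2 * t / 2) * cexp (-I * ((ω - u : ℝ) : ℂ) * w) := by
  have hint : Integrable (Function.uncurry fun (u w : ℝ) => c2ker A u *
      (cexp (-(w : ℂ) ^ 2 * t / 2) * cexp (-I * ((ω - u : ℝ) : ℂ) * w)))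
      (volume.prod volume) := by
    have h := (c2ker_integrable hA).mul_prod (c2_gauss_integrable ht)
    have h2 := h.mul_bdd (c := 1)
      (g := fun z : ℝ × ℝ => cexp (-I * ((ω - z.1 : ℝ) : ℂ) * z.2))
      (by
        apply Continuous.aestronglyMeasurable
        fun_prop)
      (Filter.Eventually.of_forall fun z => by
        have : -I * ((ω - z.1 : ℝ) : ℂ) * z.2 = ((-(ω - z.1) * z.2 : ℝ) : ℂ) * I := by
          push_cast; ring
        rw [this, Complex.norm_exp_ofReal_mul_I])
    refine h2.congr (Filter.Eventually.of_forall fun z => ?_)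
    simp only [Function.uncurry]
    ring
  simp_rw [← integral_const_mul (c2ker A _)]
  rw [integral_integral_swap hint, ← integral_const_mul]
  congr 1; funext w
  rw [← c2ker_integral hA w, mul_assoc, mul_assoc, ← integral_mul_const]
  congr 2; funext u
  have : cexp (-I * ((ω - u : ℝ) : ℂ) * w) = cexp (I * w * u) * cexp (-I * ω * w) := by
    rw [← Complex.exp_add]; congr 1; push_cast; ring
  rw [this]; ring


/-- Fourier transform of w ↦ e^{-w²t/2} c₂(μ,y;iw)/(iw+βμ), where
c₂(μ,y;iw) = βs·iw - βμ and s = 2·1_{[z1,∞)}(y) - 1. -/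
theorem fourier_c2_term
    (z1 : ℝ) (β : ℝ) (hβ : β ∈ Set.Ioo (-1 : ℝ) 1) (hβ0 : β ≠ 0)
    (μ : ℝ) (hμ : μ ≠ 0) (t : ℝ) (ht : 0 < t) (y : ℝ) :
    let s : ℝ := 2 * (if z1 ≤ y then (1 : ℝ) else 0) - 1
    Integrable (fun w : ℝ =>
      Complex.exp (-(w : ℂ) ^ 2 * t / 2) *
        ((β : ℂ) * s * (Complex.I * w) - (β : ℂ) * μ) /
        (Complex.I * w + (β : ℂ) * μ)) ∧
    ∀ ω : ℝ,
      ((Real.sqrt (2 * Real.pi) : ℂ))⁻¹ *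
        (∫ w : ℝ,
          Complex.exp (-(w : ℂ) ^ 2 * t / 2) *
            ((β : ℂ) * s * (Complex.I * w) - (β : ℂ) * μ) /
            (Complex.I * w + (β : ℂ) * μ) *
            Complex.exp (-Complex.I * ω * w)) =
      ((β * s / Real.sqrt t * Real.exp (-ω ^ 2 / (2 * t)) -
        |β * μ| / Real.sqrt t * (1 + β * s) *
          ∫ u : ℝ, Real.exp (β * μ * u) * (if β * μ * u < 0 then (1 : ℝ) else 0) *
            Real.exp (-(ω - u) ^ 2 / (2 * t)) : ℝ) : ℂ) := by
  intro s
  have hA : β * μ ≠ 0 := mul_ne_zero hβ0 hμ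
  have hne := c2_quot_ne hA
  have hdec : (fun w : ℝ => cexp (-(w : ℂ) ^ 2 * t / 2) *
        ((β : ℂ) * s * (I * w) - (β : ℂ) * μ) / (I * w + (β : ℂ) * μ)) =
      fun w : ℝ => (β * s : ℂ) * cexp (-(w : ℂ) ^ 2 * t / 2) -
        (1 + β * s : ℂ) * (((β * μ : ℝ) : ℂ) / (I * (w : ℂ) + ((β * μ : ℝ) : ℂ)) *
          cexp (-(w : ℂ) ^ 2 * t / 2)) := by
    funext w
    have h := hne w
    push_cast at h ⊢
    rw [div_eq_iff h, sub_mul]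
    have h5 : (β * μ : ℂ) / (I * w + β * μ) * (I * w + β * μ) = β * μ := div_mul_cancel₀ _ h
    linear_combination (1 + β * s : ℂ) * cexp (-(w : ℂ) ^ 2 * t / 2) * h5
  have hg := c2_gauss_integrable ht
  have hq := c2_quot_integrable hA ht
  constructor
  · rw [hdec]
    exact (hg.const_mul _).sub (hq.const_mul _)
  · intro ω
    have e1 : (∫ w : ℝ, cexp (-(w : ℂ) ^ 2 * t / 2) *
        ((β : ℂ) * s * (I * w) - (β : ℂ) * μ) / (I * w + (β : ℂ) * μ) * cexp (-I * ω * w)) =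
        (β * s : ℂ) * (∫ w : ℝ, cexp (-(w : ℂ) ^ 2 * t / 2) * cexp (-I * ω * w)) -
        (1 + β * s : ℂ) * ∫ w : ℝ, ((β * μ : ℝ) : ℂ) / (I * (w : ℂ) + ((β * μ : ℝ) : ℂ)) *
          cexp (-(w : ℂ) ^ 2 * t / 2) * cexp (-I * ω * w) := by
      rw [← integral_const_mul, ← integral_const_mul, ← integral_sub
        ((c2_osc_integrable hg ω).const_mul _) ((c2_osc_integrable hq ω).const_mul _)]
      congr 1; funext w
      rw [congrFun hdec w]
      ring
    have e2 : ((Real.sqrt (2 * Real.pi) : ℂ))⁻¹ * (∫ u : ℝ, c2ker (β * μ) u *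
        ∫ w : ℝ, cexp (-(w : ℂ) ^ 2 * t / 2) * cexp (-I * ((ω - u : ℝ) : ℂ) * w)) =
        ((1 / Real.sqrt t * ∫ u : ℝ, Real.exp (β * μ * u) *
          (if β * μ * u < 0 then (1 : ℝ) else 0) *
            Real.exp (-(ω - u) ^ 2 / (2 * t)) : ℝ) : ℂ) := by
      rw [← integral_const_mul, ← integral_const_mul, ← integral_complex_ofReal]
      congr 1; funext u
      rw [mul_left_comm, c2_gauss_fourier ht, c2ker, ← Complex.ofReal_mul]
      congr 1; ring
    have e3 := c2_gauss_fourier ht ω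
    rw [e1, c2_swap hA ht]
    calc _ = (β * s : ℂ) * (((Real.sqrt (2 * Real.pi) : ℂ))⁻¹ *
            ∫ w : ℝ, cexp (-(w : ℂ) ^ 2 * t / 2) * cexp (-I * ω * w)) -
          (1 + β * s : ℂ) * (|β * μ| : ℝ) * (((Real.sqrt (2 * Real.pi) : ℂ))⁻¹ *
          (∫ u : ℝ, c2ker (β * μ) u *
        ∫ w : ℝ, cexp (-(w : ℂ) ^ 2 * t / 2) * cexp (-I * ((ω - u : ℝ) : ℂ) * w))) := by ring
      _ = _ := by
        rw [e2, e3]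
        generalize (∫ u : ℝ, Real.exp (β * μ * u) *
          (if β * μ * u < 0 then (1 : ℝ) else 0) * Real.exp (-(ω - u) ^ 2 / (2 * t))) = J
        norm_cast
        ring
end

section
/- (Transition density of the β-SBM with drift μ; analytic form.) Fix z1 ∈ ℝ, β ∈ (−1,1)∖{0}, μ ∈ ℝ∖{0}, t > 0, x, y ∈ ℝ. Set s = 2·1_{[z1,∞)}(y) − 1, a₂ = |y−z1| + |x−z1| − |y−x| and D = |x−z1| + |y−z1| (= a₂ + |x−y|). Then e^{μ(y−x) − μ²t/2} · [ (1/2π) ∫_ℝ e^{−w²t/2} e^{−iw|x−y|} dw + (1/2π) ∫_ℝ e^{−w²t/2} (βs·iw − βμ)/(iw + βμ) · e^{−iw(a₂ + |x−y|)} dw ] − βμ(1 + βs) e^{μ(y−x) − μ²t/2} e^{β²μ²t/2} e^{βμ D} 1_{ℝ⁻}(βμ) = (2πt)^{−1/2} e^{μ(y−x) − μ²t/2} [ e^{−|x−y|²/(2t)} + βs e^{−D²/(2t)} ] − (1 + βs) βμ e^{μ(y−x) − μ²t/2 + β²μ²t/2 + βμ D} Φ^c( D/√t + βμ√t ). Moreover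 this common value equals p^{(0)}_μ(t,x,y) v^{(β)}_μ(t,x,y), where p^{(0)}_μ(t,x,y) = (2πt)^{−1/2} e^{−(y−x−μt)²/(2t)} and v^{(β)}_μ(t,x,y) = (1 − e^{−2x₁y₁/t}) 1_{x₁y₁>0} + (1 + βs) e^{−(2x₁y₁/t) 1_{x₁y₁>0}} [ 1 − βμ √(2πt) e^{(|x₁|+|y₁|+tβμ)²/(2t)} Φ^c((|x₁|+|y₁|+tβμ)/√t) ] with x₁ = x − z1, y₁ = y − z1. -/
open Complex MeasureTheory

lemma gi : Integrable (fun u : ℝ => Real.exp (-u ^ 2 / 2)) := by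
  have := integrable_exp_neg_mul_sq (b := 1/2) (by norm_num)
  refine this.congr (Filter.Eventually.of_forall fun u => ?_)
  simp only; congr 1; ring

lemma gaussTail_neg (y : ℝ) : gaussTail (-y) = 1 - gaussTail y := by
  unfold gaussTail
  have h1 : ∫ u in Set.Ioi (-y), Real.exp (-u ^ 2 / 2) = ∫ u in Set.Iic y, Real.exp (-u ^ 2 / 2) := by
    have := integral_comp_neg_Ioi (-y) (fun u : ℝ => Real.exp (-u ^ 2 / 2))
    simpa using this
  have h2 : (∫ u in Set.Iic y, Real.exp (-u ^ 2 / 2)) + ∫ u in Set.Ioi y, Real.exp (-u ^ 2 / 2)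
      = Real.sqrt (2 * Real.pi) := by
    have := integral_add_compl (s := Set.Iic y) measurableSet_Iic gi
    rw [Set.compl_Iic] at this
    rw [this]
    have h := integral_gaussian (1/2)
    rw [show Real.pi / (1/2) = 2 * Real.pi by ring] at h
    rw [← h]; congr 1; ext u; congr 1; ring
  have h3 : Real.sqrt (2 * Real.pi) ≠ 0 := by positivity
  rw [h1, eq_sub_of_add_eq h2, mul_sub, inv_mul_cancel₀ h3]

lemma shift (g : ℝ → ℝ) (c : ℝ) : ∫ u in Set.Ioi (0:ℝ), g (u + c) = ∫ u in Set.Ioi c, g u := by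
  rw [← integral_indicator measurableSet_Ioi, ← integral_indicator measurableSet_Ioi,
    ← integral_add_right_eq_self ((Set.Ioi c).indicator g) c]
  congr 1; ext u
  simp [Set.indicator]

lemma tail_affine (k c : ℝ) (hk : 0 < k) :
    ∫ u in Set.Ioi (0:ℝ), Real.exp (-(k * u + c) ^ 2 / 2) =
      k⁻¹ * (Real.sqrt (2 * Real.pi) * gaussTail c) := by
  have := integral_comp_mul_left_Ioi (fun v => Real.exp (-(v + c) ^ 2 / 2)) 0 hk
  rw [this, mul_zero, shift (fun v => Real.exp (-v ^ 2 / 2)), gaussTail]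
  have h3 : Real.sqrt (2 * Real.pi) ≠ 0 := by positivity
  rw [mul_inv_cancel_left₀ h3, smul_eq_mul]

lemma gauss_ft (t : ℝ) (ht : 0 < t) (D : ℝ) :
    ∫ w : ℝ, Complex.exp (-(w : ℂ) ^ 2 * t / 2) * Complex.exp (-Complex.I * w * D) =
      ((Real.sqrt (2 * Real.pi / t) * Real.exp (-D ^ 2 / (2 * t)) : ℝ) : ℂ) := by
  have h := fourierIntegral_gaussian (b := ((t / 2 : ℝ) : ℂ)) (by simpa using ht) (-D : ℂ)
  have e1 : ((Real.pi : ℂ) / ((t / 2 : ℝ) : ℂ)) ^ (1 / 2 : ℂ) = ((Real.sqrt (2 * Real.pi / t) : ℝ) : ℂ) := by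
    rw [Real.sqrt_eq_rpow, Complex.ofReal_cpow (by positivity)]
    push_cast
    congr 1
    field_simp
  rw [e1] at h
  rw [Complex.ofReal_mul, Complex.ofReal_exp]
  convert h using 1
  · congr 1; ext w
    rw [mul_comm]
    congr 2
    · ring
    · push_cast; ring
  · congr 2
    have : (t : ℂ) ≠ 0 := by exact_mod_cast ht.ne'
    push_cast
    field_simp
    try ring

lemma J_pos (t : ℝ) (ht : 0 < t) (b : ℝ) (hb : 0 < b) (D : ℝ) :
    ∫ w : ℝ, Complex.exp (-(w : ℂ) ^ 2 * t / 2) * Complex.exp (-Complex.I * w * D) /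
      (Complex.I * w + b) =
      ((2 * Real.pi * (Real.exp (b ^ 2 * t / 2 + b * D) *
        gaussTail (D / Real.sqrt t + b * Real.sqrt t)) : ℝ) : ℂ) := by
  have hs : 0 < Real.sqrt t := Real.sqrt_pos.2 ht
  have hss : Real.sqrt t ^ 2 = t := Real.sq_sqrt ht.le
  let F : ℝ → ℝ → ℂ := fun w u => Complex.exp (-(w : ℂ) ^ 2 * t / 2) *
    Complex.exp (-Complex.I * w * D) * Complex.exp (-(Complex.I * w + b) * u)
  have hF : Integrable (Function.uncurry F) (volume.prod (volume.restrict (Set.Ioi (0:ℝ)))) := by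
    have g1 := integrable_exp_neg_mul_sq (b := t/2) (by positivity)
    have g2 : IntegrableOn (fun u : ℝ => Real.exp (-b * u)) (Set.Ioi 0) :=
      integrableOn_exp_mul_Ioi (by linarith) 0
    have g3 := Integrable.mul_prod g1 g2
    refine g3.mono' ?_ (Filter.Eventually.of_forall ?_)
    · apply Continuous.aestronglyMeasurable
      simp only [F, Function.uncurry_def]
      fun_prop
    · rintro ⟨w, u⟩
      simp only [F, Function.uncurry]
      rw [norm_mul, norm_mul, Complex.norm_exp, Complex.norm_exp, Complex.norm_exp,
        ← Real.exp_add, ← Real.exp_add, ← Real.exp_add]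
      apply le_of_eq
      congr 1
      have : (-(w:ℂ) ^ 2 * t / 2) = ((-w ^ 2 * t / 2 : ℝ) : ℂ) := by push_cast; ring
      rw [this, Complex.ofReal_re]
      simp
      ring
  have h1 : ∀ w : ℝ, ∫ u in Set.Ioi (0:ℝ), F w u = Complex.exp (-(w : ℂ) ^ 2 * t / 2) *
      Complex.exp (-Complex.I * w * D) / (Complex.I * w + b) := by
    intro w
    simp only [F]
    rw [integral_const_mul, integral_exp_mul_complex_Ioi (by simpa using hb)]
    simp [div_eq_mul_inv, ← neg_inv]
    try rw [← neg_add, ← neg_inv]; simp [add_comm]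
  have h2 : ∀ u : ℝ, ∫ w : ℝ, F w u = ((Real.sqrt (2 * Real.pi / t) *
      Real.exp (b ^ 2 * t / 2 + b * D) * Real.exp (-((Real.sqrt t)⁻¹ * u +
      (D / Real.sqrt t + b * Real.sqrt t)) ^ 2 / 2) : ℝ) : ℂ) := by
    intro u
    have : ∀ w : ℝ, F w u = (Real.exp (-b * u) : ℂ) * (Complex.exp (-(w : ℂ) ^ 2 * t / 2) *
        Complex.exp (-Complex.I * w * (D + u : ℝ))) := by
      intro w
      simp only [F]
      push_cast
      rw [← Complex.exp_add, ← Complex.exp_add, ← Complex.exp_add, ← Complex.exp_add]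
      congr 1; ring
    simp_rw [this]
    rw [integral_const_mul, gauss_ft t ht, ← Complex.ofReal_mul]
    congr 1
    rw [mul_left_comm, mul_assoc, ← Real.exp_add, ← Real.exp_add]
    congr 2
    have e : (Real.sqrt t)⁻¹ * u + (D / Real.sqrt t + b * Real.sqrt t)
      = (u + D + b * t) / Real.sqrt t := by
      field_simp; rw [hss]; ring
    rw [e, div_pow, hss]
    field_simp
    ring
  calc _ = ∫ w : ℝ, ∫ u in Set.Ioi (0:ℝ), F w u := by simp_rw [h1]
    _ = ∫ u in Set.Ioi (0:ℝ), ∫ w : ℝ, F w u := integral_integral_swap hF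
    _ = _ := by
      simp_rw [h2]
      rw [integral_complex_ofReal, integral_const_mul, tail_affine _ _ (by positivity)]
      congr 1
      rw [inv_inv, Real.sqrt_div (by positivity)]
      have := Real.mul_self_sqrt (show 0 ≤ 2 * Real.pi by positivity)
      field_simp
      rw [pow_two, this]
      try ring

lemma J_all (t : ℝ) (ht : 0 < t) (b : ℝ) (hb : b ≠ 0) (D : ℝ) :
    ∫ w : ℝ, Complex.exp (-(w : ℂ) ^ 2 * t / 2) * Complex.exp (-Complex.I * w * D) /
      (Complex.I * w + b) =
      ((2 * Real.pi * (Real.exp (b ^ 2 * t / 2 + b * D) *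
        (gaussTail (D / Real.sqrt t + b * Real.sqrt t) - if b < 0 then 1 else 0)) : ℝ) : ℂ) := by
  rcases lt_or_gt_of_ne hb with h | h
  · have := J_pos t ht (-b) (by linarith) (-D)
    rw [← integral_neg_eq_self] at this
    have e : -D / Real.sqrt t + -b * Real.sqrt t = -(D / Real.sqrt t + b * Real.sqrt t) := by ring
    rw [e, gaussTail_neg] at this
    rw [if_pos h, show (gaussTail (D / Real.sqrt t + b * Real.sqrt t) - 1)
      = -(1 - gaussTail (D / Real.sqrt t + b * Real.sqrt t)) by ring, mul_neg, mul_neg,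
      Complex.ofReal_neg]
    rw [show b ^ 2 * t / 2 + b * D = (-b) ^ 2 * t / 2 + (-b) * (-D) by ring, ← this,
      ← integral_neg]
    congr 1; ext w
    push_cast
    rw [show Complex.I * -(w:ℂ) + -(b:ℂ) = -(Complex.I * w + b) by ring, div_neg, neg_neg]
    congr 3 <;> ring
  · rw [J_pos t ht b h, if_neg (by linarith), sub_zero]

lemma second_int (t : ℝ) (ht : 0 < t) (b : ℝ) (hb : b ≠ 0) (D c : ℝ) :
    ∫ w : ℝ, Complex.exp (-(w : ℂ) ^ 2 * t / 2) * (((c : ℂ) * (Complex.I * w) - b) /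
      (Complex.I * w + b)) * Complex.exp (-Complex.I * w * D) =
      ((c * (Real.sqrt (2 * Real.pi / t) * Real.exp (-D ^ 2 / (2 * t))) - b * (1 + c) *
      (2 * Real.pi * (Real.exp (b ^ 2 * t / 2 + b * D) *
        (gaussTail (D / Real.sqrt t + b * Real.sqrt t) - if b < 0 then 1 else 0))) : ℝ) : ℂ) := by
  have hne : ∀ w : ℝ, Complex.I * w + (b:ℂ) ≠ 0 := by
    intro w h
    have := congrArg Complex.re h
    simp at this
    exact hb this
  have i1 : Integrable (fun w : ℝ => Complex.exp (-(w : ℂ) ^ 2 * t / 2) *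
      Complex.exp (-Complex.I * w * D)) := by
    refine (integrable_exp_neg_mul_sq (b := t/2) (by positivity)).mono'
      (by apply Continuous.aestronglyMeasurable; fun_prop) (Filter.Eventually.of_forall fun w => ?_)
    have : (-(w:ℂ) ^ 2 * t / 2) = ((-w ^ 2 * t / 2 : ℝ) : ℂ) := by push_cast; ring
    rw [norm_mul, Complex.norm_exp, Complex.norm_exp, ← Real.exp_add, this, Complex.ofReal_re]
    apply le_of_eq; congr 1; simp; ring
  have i2 : Integrable (fun w : ℝ => Complex.exp (-(w : ℂ) ^ 2 * t / 2) *
      Complex.exp (-Complex.I * w * D) / (Complex.I * w + b)) := by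
    refine (i1.norm.mul_const (|b|⁻¹)).mono' ?_ (Filter.Eventually.of_forall fun w => ?_)
    · apply Continuous.aestronglyMeasurable
      exact Continuous.div (by fun_prop) (by fun_prop) hne
    · rw [norm_div, div_eq_mul_inv]
      gcongr
      have := Complex.abs_re_le_norm (Complex.I * w + b)
      simpa using this
  rw [Complex.ofReal_sub, Complex.ofReal_mul c, Complex.ofReal_mul (b * (1 + c)),
    ← J_all t ht b hb, ← gauss_ft t ht, ← integral_const_mul, ← integral_const_mul,
    ← integral_sub (i1.const_mul _) (i2.const_mul _)]
  congr 1; ext w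
  have := hne w
  have e : ((c : ℂ) * (Complex.I * w) - b) / (Complex.I * w + b) =
      c - b * (1 + c) / (Complex.I * w + b) := by
    rw [eq_sub_iff_add_eq, ← add_div, div_eq_iff this]; ring
  rw [e]
  push_cast
  ring

theorem transition_density_one_barrier_drift
    (z1 : ℝ) (β : ℝ) (hβ : β ∈ Set.Ioo (-1 : ℝ) 1) (hβ0 : β ≠ 0)
    (μ : ℝ) (hμ : μ ≠ 0) (t : ℝ) (ht : 0 < t) (x y : ℝ) :
    let s : ℝ := 2 * (if z1 ≤ y then (1 : ℝ) else 0) - 1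
    let a2 : ℝ := |y - z1| + |x - z1| - |y - x|
    let D : ℝ := |x - z1| + |y - z1|
    let E2 : ℝ :=
      (Real.sqrt (2 * Real.pi * t))⁻¹ * Real.exp (μ * (y - x) - μ ^ 2 * t / 2) *
          (Real.exp (-|x - y| ^ 2 / (2 * t)) + β * s * Real.exp (-D ^ 2 / (2 * t))) -
        (1 + β * s) * (β * μ) *
          Real.exp (μ * (y - x) - μ ^ 2 * t / 2 + β ^ 2 * μ ^ 2 * t / 2 + β * μ * D) *
          gaussTail (D / Real.sqrt t + β * μ * Real.sqrt t)
    (Complex.exp ((μ : ℂ) * (y - x) - (μ : ℂ) ^ 2 * t / 2) *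
        ((1 / (2 * Real.pi) : ℂ) *
            (∫ w : ℝ, Complex.exp (-(w : ℂ) ^ 2 * t / 2) *
              Complex.exp (-Complex.I * w * |x - y|)) +
          (1 / (2 * Real.pi) : ℂ) *
            (∫ w : ℝ, Complex.exp (-(w : ℂ) ^ 2 * t / 2) *
              (((β : ℂ) * s * (Complex.I * w) - (β : ℂ) * μ) /
                (Complex.I * w + (β : ℂ) * μ)) *
              Complex.exp (-Complex.I * w * (a2 + |x - y|)))) -
        (β : ℂ) * μ * (1 + (β : ℂ) * s) *
          Complex.exp ((μ : ℂ) * (y - x) - (μ : ℂ) ^ 2 * t / 2) *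
          Complex.exp ((β : ℂ) ^ 2 * μ ^ 2 * t / 2) *
          Complex.exp ((β : ℂ) * μ * D) *
          (if β * μ < 0 then (1 : ℂ) else 0) = (E2 : ℂ)) ∧
      E2 =
        ((Real.sqrt (2 * Real.pi * t))⁻¹ * Real.exp (-(y - x - μ * t) ^ 2 / (2 * t))) *
          ((1 - Real.exp (-2 * (x - z1) * (y - z1) / t)) *
              (if 0 < (x - z1) * (y - z1) then (1 : ℝ) else 0) +
            (1 + β * s) *
              Real.exp (-(2 * (x - z1) * (y - z1) / t) *
                (if 0 < (x - z1) * (y - z1) then (1 : ℝ) else 0)) *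
              (1 - β * μ * Real.sqrt (2 * Real.pi * t) *
                Real.exp ((|x - z1| + |y - z1| + t * β * μ) ^ 2 / (2 * t)) *
                gaussTail ((|x - z1| + |y - z1| + t * β * μ) / Real.sqrt t))) := by
  intro s a2 D E2
  have hst : Real.sqrt (2 * Real.pi * t) ≠ 0 := by positivity
  have hs : 0 < Real.sqrt t := Real.sqrt_pos.2 ht
  have hss : Real.sqrt t ^ 2 = t := Real.sq_sqrt ht.le
  constructor
  · have hD : ((a2 : ℂ) + (|x - y| : ℝ)) = (D : ℂ) := by
      rw [← Complex.ofReal_add]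
      congr 1
      simp only [a2, D]
      rw [abs_sub_comm y x]; ring
    rw [hD, gauss_ft t ht]
    have h2 := second_int t ht (β * μ) (mul_ne_zero hβ0 hμ) D (β * s)
    push_cast at h2
    have hr : Real.sqrt (2 * Real.pi / t) = 2 * Real.pi * (Real.sqrt (2 * Real.pi * t))⁻¹ := by
      rw [Real.sqrt_div (by positivity), Real.sqrt_mul (show 0 ≤ 2 * Real.pi by positivity) t]
      have := Real.mul_self_sqrt (show 0 ≤ 2 * Real.pi by positivity)
      field_simp
      linarith
    rw [h2]
    have hE : Real.exp (μ * (y - x) - μ ^ 2 * t / 2 + β ^ 2 * μ ^ 2 * t / 2 + β * μ * D)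
      = Real.exp (μ * (y - x) - μ ^ 2 * t / 2) * Real.exp (β ^ 2 * μ ^ 2 * t / 2) *
        Real.exp (β * μ * D) := by rw [← Real.exp_add, ← Real.exp_add]
    have hE' : Complex.exp ((β * μ : ℂ) ^ 2 * t / 2 + β * μ * D) =
      Complex.exp (β ^ 2 * μ ^ 2 * t / 2) * Complex.exp (β * μ * D) := by
      rw [← Complex.exp_add, mul_pow]
    simp only [E2]
    rw [hE, hr, hE']
    have hpi : (Real.pi : ℂ) ≠ 0 := by exact_mod_cast Real.pi_ne_zero
    push_cast
    have hif : (((if β * μ < 0 then (1:ℝ) else 0) : ℝ) : ℂ) = if β * μ < 0 then (1 : ℂ) else 0 := by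
      split_ifs <;> simp
    try rw [hif]
    field_simp
    ring
  · have key : D ^ 2 = (y - x) ^ 2 + 4 * ((x - z1) * (y - z1)) *
        (if 0 < (x - z1) * (y - z1) then (1 : ℝ) else 0) := by
      simp only [D]
      have e1 : (|x - z1| + |y - z1|) ^ 2 = (x - z1) ^ 2 + (y - z1) ^ 2 +
        2 * |(x - z1) * (y - z1)| := by
        rw [abs_mul, ← sq_abs (x - z1), ← sq_abs (y - z1)]; ring
      rw [e1]
      split_ifs with h
      · rw [abs_of_pos h]; ring
      · rw [abs_of_nonpos (not_lt.1 h)]; ring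
    have eD : |x - z1| + |y - z1| = D := rfl
    have earg : (D + t * β * μ) / Real.sqrt t = D / Real.sqrt t + β * μ * Real.sqrt t := by
      field_simp; rw [hss]; ring
    rw [eD, earg]
    simp only [E2]
    set G := gaussTail (D / Real.sqrt t + β * μ * Real.sqrt t)
    set i := (if 0 < (x - z1) * (y - z1) then (1 : ℝ) else 0) with hi
    have hi' : i = 0 ∨ i = 1 := by rw [hi]; split_ifs <;> simp
    set P := Real.exp (μ * (y - x) - μ ^ 2 * t / 2)
    have a1 : Real.exp (-(y - x - μ * t) ^ 2 / (2 * t)) = P * Real.exp (-|x - y| ^ 2 / (2 * t)) := by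
      rw [← Real.exp_add, sq_abs]; congr 1; field_simp; ring
    have a3 : Real.exp (-D ^ 2 / (2 * t)) = Real.exp (-|x - y| ^ 2 / (2 * t)) *
        Real.exp (-(2 * (x - z1) * (y - z1) / t) * i) := by
      rw [← Real.exp_add, sq_abs, key]; congr 1; field_simp; ring
    have a4 : Real.exp (μ * (y - x) - μ ^ 2 * t / 2 + β ^ 2 * μ ^ 2 * t / 2 + β * μ * D) =
        P * Real.exp (-D ^ 2 / (2 * t)) * Real.exp ((D + t * β * μ) ^ 2 / (2 * t)) := by
      rw [← Real.exp_add, ← Real.exp_add]; congr 1; field_simp; ring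
    have a5 : (1 - Real.exp (-2 * (x - z1) * (y - z1) / t)) * i =
        1 - Real.exp (-(2 * (x - z1) * (y - z1) / t) * i) := by
      rcases hi' with h | h <;> rw [h]
      · simp
      · rw [mul_one, mul_one]; congr 2; ring
    rw [a4, a3, a1, a5]
    field_simp
    ring
end

section
/- Fix z1 ∈ ℝ, β ∈ (−1,1)∖{0}, μ ∈ ℝ∖{0}, t > 0, x, y ∈ ℝ, and set s = 2·1_{[z1,∞)}(y) − 1, a₂ = |y−z1| + |x−z1| − |y−x| ≥ 0, c₂(ξ) = βsξ − βμ for ξ ∈ ℂ. Let ℓ : ℝ → [0,∞) be any function with ℓ(u) → 0 as |u| → ∞. Then lim_{|u|→∞} ∫_0^{ℓ(u)} exp((v+iu)² t/2) · e^{−(v+iu)|y−x|} · ( 1 + c₂(v+iu)/(v+iu+βμ) · e^{−(v+iu) a₂} ) dv = 0. -/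
open Complex MeasureTheory

/-- the integral over the horizontal segment ρ_M tends to 0 as |u| → ∞,
for the β-SBM with drift μ. -/
theorem segment_integral_tendsto_zero_drift
    (z1 : ℝ) (β : ℝ) (hβ : β ∈ Set.Ioo (-1 : ℝ) 1) (hβ0 : β ≠ 0)
    (μ : ℝ) (hμ : μ ≠ 0) (t : ℝ) (ht : 0 < t) (x y : ℝ)
    (ℓ : ℝ → ℝ) (hℓ0 : ∀ u, 0 ≤ ℓ u)
    (hℓ : Filter.Tendsto ℓ (Filter.comap (fun u : ℝ => |u|) Filter.atTop) (nhds 0)) :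
    let s : ℝ := 2 * (if z1 ≤ y then (1 : ℝ) else 0) - 1
    let a2 : ℝ := |y - z1| + |x - z1| - |y - x|
    Filter.Tendsto
      (fun u : ℝ =>
        ∫ v in (0 : ℝ)..(ℓ u),
          Complex.exp (((v : ℂ) + u * Complex.I) ^ 2 * t / 2) *
            Complex.exp (-((v : ℂ) + u * Complex.I) * |y - x|) *
            (1 + ((β : ℂ) * s * ((v : ℂ) + u * Complex.I) - (β : ℂ) * μ) /
                ((v : ℂ) + u * Complex.I + (β : ℂ) * μ) *
              Complex.exp (-((v : ℂ) + u * Complex.I) * a2)))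
      (Filter.comap (fun u : ℝ => |u|) Filter.atTop) (nhds 0) := by
  intro s a2
  have ha2 : 0 ≤ a2 := by
    have h := abs_sub_le y z1 x
    have h' := abs_sub_comm x z1
    simp only [a2]
    linarith
  set M : ℝ := Real.exp (t / 2) * 1 * (1 + (|β| * |s| * 2 + |β| * |μ|) * 1) with hM
  have hlim : Filter.Tendsto (fun u => M * ℓ u)
      (Filter.comap (fun u : ℝ => |u|) Filter.atTop) (nhds 0) := by
    simpa using hℓ.const_mul M
  refine squeeze_zero_norm' ?_ hlim
  have h1 : ∀ᶠ u in Filter.comap (fun u : ℝ => |u|) Filter.atTop, ℓ u < 1 :=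
    hℓ.eventually (gt_mem_nhds one_pos)
  have h2 : ∀ᶠ u in Filter.comap (fun u : ℝ => |u|) Filter.atTop, 1 ≤ |u| :=
    Filter.tendsto_comap.eventually (Filter.eventually_ge_atTop 1)
  filter_upwards [h1, h2] with u hu1 hu2
  have key := intervalIntegral.norm_integral_le_of_norm_le_const (a := 0) (b := ℓ u) (C := M)
    (f := fun v : ℝ => Complex.exp (((v : ℂ) + u * Complex.I) ^ 2 * t / 2) *
            Complex.exp (-((v : ℂ) + u * Complex.I) * |y - x|) *
            (1 + ((β : ℂ) * s * ((v : ℂ) + u * Complex.I) - (β : ℂ) * μ) /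
                ((v : ℂ) + u * Complex.I + (β : ℂ) * μ) *
              Complex.exp (-((v : ℂ) + u * Complex.I) * a2))) ?_
  · rw [sub_zero, abs_of_nonneg (hℓ0 u)] at key
    exact key
  intro v hv
  rw [Set.uIoc_of_le (hℓ0 u)] at hv
  have hv0 : 0 ≤ v := hv.1.le
  have hv1 : v ≤ 1 := hv.2.trans hu1.le
  have hexp : ∀ d : ℝ, 0 ≤ d → ‖Complex.exp (-((v : ℂ) + u * Complex.I) * d)‖ ≤ 1 := by
    intro d hd
    rw [Complex.norm_exp]
    simp
    positivity
  have hsq : ‖Complex.exp (((v : ℂ) + u * Complex.I) ^ 2 * t / 2)‖ ≤ Real.exp (t / 2) := by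
    rw [Complex.norm_exp]
    apply Real.exp_le_exp.mpr
    have e : (((v : ℂ) + u * Complex.I) ^ 2 * t / 2)
        = (((v ^ 2 - u ^ 2) * t / 2 : ℝ) : ℂ) + ((v * u * t : ℝ) : ℂ) * Complex.I := by
      push_cast
      linear_combination ((u : ℂ) ^ 2 * t / 2) * Complex.I_sq
    rw [e, Complex.add_re, Complex.ofReal_re, Complex.re_ofReal_mul, Complex.I_re]
    have : v ^ 2 - u ^ 2 ≤ 1 := by nlinarith [sq_nonneg u]
    nlinarith
  have hw : ‖(v : ℂ) + u * Complex.I‖ ≤ 2 * |u| := by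
    refine (norm_add_le _ _).trans ?_
    simp [abs_of_nonneg hv0]
    linarith
  have hden : |u| ≤ ‖(v : ℂ) + u * Complex.I + (β : ℂ) * μ‖ := by
    have := Complex.abs_im_le_norm ((v : ℂ) + u * Complex.I + (β : ℂ) * μ)
    simpa using this
  have hrat : ‖((β : ℂ) * s * ((v : ℂ) + u * Complex.I) - (β : ℂ) * μ) /
      ((v : ℂ) + u * Complex.I + (β : ℂ) * μ)‖ ≤ |β| * |s| * 2 + |β| * |μ| := by
    rw [norm_div, div_le_iff₀ (by linarith)]
    calc _ ≤ ‖(β : ℂ) * s * ((v : ℂ) + u * Complex.I)‖ + ‖(β : ℂ) * μ‖ := norm_sub_le _ _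
      _ = |β| * |s| * ‖(v : ℂ) + u * Complex.I‖ + |β| * |μ| * 1 := by
        simp only [norm_mul, Complex.norm_real, Real.norm_eq_abs, mul_one]
      _ ≤ |β| * |s| * (2 * |u|) + |β| * |μ| * |u| := by gcongr
      _ = (|β| * |s| * 2 + |β| * |μ|) * |u| := by ring
      _ ≤ _ := by gcongr
  rw [norm_mul, norm_mul, hM]
  refine mul_le_mul (mul_le_mul hsq (hexp _ (abs_nonneg _)) (norm_nonneg _) (Real.exp_pos _).le)
    ?_ (norm_nonneg _) (by positivity)
  refine (norm_add_le _ _).trans ?_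
  rw [norm_one, norm_mul]
  exact add_le_add le_rfl (mul_le_mul hrat (hexp _ ha2) (norm_nonneg _) (by positivity))
end

section
/- (Generalized rejection sampling.) Let g, h : ℝ → [0,∞) be measurable with 0 < ∫_ℝ g dx < ∞ and 0 < ∫_ℝ h dx < ∞, and suppose there exists M > 0 such that f(y) := h(y)/(M g(y)) satisfies 0 < f(y) ≤ 1 for all y ∈ ℝ (in particular g > 0 on ℝ). Let (f_n)_{n∈ℕ} be measurable functions and (δ_n)_{n∈ℕ} a decreasing sequence of positive reals tending to 0 with |f(y) − f_n(y)| < δ_n for all y ∈ ℝ and n ∈ ℕ. Let Y and U be independent random variables where Y has density g/∫g with respect to Lebesgue measure and U is uniform on [0,1], and let E be the event {∃ n ∈ ℕ : |U − f_n(Y)| > δ_n and U < f_n(Y)}. Then E = {U < f(Y)} (up to a ℙ-null set), ℙ(E) = (∫_ℝ h dx)/(M ∫_ℝ g dx) > 0, and for every Borel set A ⊆ ℝ, ℙ(Y ∈ A | E) = (∫_A h dx)/(∫_ℝ h dx); i.e. the conditional law of Y given E has density h/∫h. -/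
open MeasureTheory

/-- generalized rejection sampling: if Y has density g/∫g, U is uniform
on [0,1] independent of Y, f = h/(Mg) ∈ (0,1] is approximated by computable f_n at rate
δ_n ↓ 0, then the acceptance event E = {∃n : |U - f_n(Y)| > δ_n, U < f_n(Y)} coincides
a.s. with {U < f(Y)}, has probability ∫h/(M∫g) > 0, and conditionally on E the law of Y
has density h/∫h. -/
theorem generalized_rejection_sampling
    {Ω : Type*} [MeasureSpace Ω] [IsProbabilityMeasure (volume : Measure Ω)]
    (g h : ℝ → ℝ) (hgmeas : Measurable g) (hhmeas : Measurable h)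
    (hg0 : ∀ x, 0 ≤ g x) (hh0 : ∀ x, 0 ≤ h x)
    (hgint : Integrable g) (hhint : Integrable h)
    (hgpos : 0 < ∫ x, g x) (hhpos : 0 < ∫ x, h x)
    (M : ℝ) (hM : 0 < M)
    (hf : ∀ y : ℝ, 0 < h y / (M * g y) ∧ h y / (M * g y) ≤ 1)
    (fn : ℕ → ℝ → ℝ) (hfnmeas : ∀ n, Measurable (fn n))
    (δ : ℕ → ℝ) (hδpos : ∀ n, 0 < δ n) (hδanti : Antitone δ)
    (hδ0 : Filter.Tendsto δ Filter.atTop (nhds 0))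
    (happrox : ∀ n y, |h y / (M * g y) - fn n y| < δ n)
    (Y U : Ω → ℝ) (hY : Measurable Y) (hUm : Measurable U)
    (hYlaw : Measure.map Y volume =
      volume.withDensity (fun x => ENNReal.ofReal (g x / ∫ u, g u)))
    (hUlaw : Measure.map U volume = volume.restrict (Set.Icc (0 : ℝ) 1))
    (hindep : ProbabilityTheory.IndepFun Y U) :
    let E : Set Ω := {ω | ∃ n : ℕ, δ n < |U ω - fn n (Y ω)| ∧ U ω < fn n (Y ω)}
    E =ᵐ[(volume : Measure Ω)] {ω : Ω | U ω < h (Y ω) / (M * g (Y ω))} ∧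
      volume E = ENNReal.ofReal ((∫ x, h x) / (M * ∫ x, g x)) ∧
      0 < volume E ∧
      ∀ A : Set ℝ, MeasurableSet A →
        volume ({ω : Ω | Y ω ∈ A} ∩ E) / volume E =
          ENNReal.ofReal ((∫ x in A, h x) / ∫ x, h x) := by
  intro E
  have hgp : ∀ y, 0 < g y := by
    intro y
    rcases (hg0 y).lt_or_eq with h1 | h1
    · exact h1
    · have := (hf y).1
      rw [← h1] at this
      simp at this
  have hE : E = {ω : Ω | U ω < h (Y ω) / (M * g (Y ω))} := by
    ext ω
    simp only [E, Set.mem_ofPred_eq]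
    constructor
    · rintro ⟨n, h1, h2⟩
      have h3 := abs_lt.1 (happrox n (Y ω))
      rw [abs_of_neg (by linarith)] at h1
      linarith [h3.1]
    · intro hlt
      have hpos : 0 < (h (Y ω) / (M * g (Y ω)) - U ω) / 2 := by linarith
      obtain ⟨n, hn⟩ := (hδ0.eventually (gt_mem_nhds hpos)).exists
      have h3 := abs_lt.1 (happrox n (Y ω))
      have h4 := hδpos n
      have h5 : U ω < fn n (Y ω) := by linarith [h3.2]
      refine ⟨n, ?_, h5⟩
      rw [abs_of_neg (by linarith)]
      linarith [h3.2]
  have hfm : Measurable (fun y => h y / (M * g y)) := hhmeas.div (hgmeas.const_mul M)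
  have hmap : Measure.map (fun ω => (Y ω, U ω)) volume =
      (Measure.map Y volume).prod (Measure.map U volume) :=
    (ProbabilityTheory.indepFun_iff_map_prod_eq_prod_map_map hY.aemeasurable
      hUm.aemeasurable).1 hindep
  have key : ∀ A : Set ℝ, MeasurableSet A → volume ({ω : Ω | Y ω ∈ A} ∩ E) =
      ENNReal.ofReal ((∫ x in A, h x) / (M * ∫ x, g x)) := by
    intro A hA
    have hS : MeasurableSet {p : ℝ × ℝ | p.1 ∈ A ∧ p.2 < h p.1 / (M * g p.1)} :=
      (measurable_fst hA).inter (measurableSet_lt measurable_snd (hfm.comp measurable_fst))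
    have h1 : ({ω : Ω | Y ω ∈ A} ∩ E) = (fun ω => (Y ω, U ω)) ⁻¹'
        {p : ℝ × ℝ | p.1 ∈ A ∧ p.2 < h p.1 / (M * g p.1)} := by
      rw [hE]; rfl
    have : IsProbabilityMeasure (Measure.map U volume) :=
      Measure.isProbabilityMeasure_map hUm.aemeasurable
    rw [h1, ← Measure.map_apply (hY.prodMk hUm) hS, hmap, Measure.prod_apply hS]
    have h2 : ∀ y, (Measure.map U volume) (Prod.mk y ⁻¹'
        {p : ℝ × ℝ | p.1 ∈ A ∧ p.2 < h p.1 / (M * g p.1)}) =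
        A.indicator (fun y => ENNReal.ofReal (h y / (M * g y))) y := by
      intro y
      by_cases hy : y ∈ A
      · have h3 : (Prod.mk y ⁻¹' {p : ℝ × ℝ | p.1 ∈ A ∧ p.2 < h p.1 / (M * g p.1)}) =
            Set.Iio (h y / (M * g y)) := by
          ext u; simp [hy]
        have h4 : Set.Iio (h y / (M * g y)) ∩ Set.Icc (0 : ℝ) 1 =
            Set.Ico 0 (h y / (M * g y)) := by
          ext u
          simp only [Set.mem_inter_iff, Set.mem_Iio, Set.mem_Icc, Set.mem_Ico]
          have := (hf y).2
          constructor
          · rintro ⟨a, b, c⟩; exact ⟨b, a⟩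
          · rintro ⟨a, b⟩; exact ⟨b, a, by linarith⟩
        rw [h3, hUlaw, Measure.restrict_apply measurableSet_Iio, h4, Real.volume_Ico,
          Set.indicator_of_mem hy, sub_zero]
      · have h3 : (Prod.mk y ⁻¹' {p : ℝ × ℝ | p.1 ∈ A ∧ p.2 < h p.1 / (M * g p.1)}) = ∅ := by
          ext u; simp [hy]
        rw [h3, Set.indicator_of_notMem hy, measure_empty]
    simp_rw [h2]
    rw [lintegral_indicator hA, hYlaw, restrict_withDensity hA,
      lintegral_withDensity_eq_lintegral_mul _
        (hgmeas.div_const _).ennreal_ofReal hfm.ennreal_ofReal,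
      ← integral_div, ofReal_integral_eq_lintegral_ofReal (hhint.integrableOn.div_const _)
        (Filter.Eventually.of_forall fun x => by
          have := hh0 x
          simp only [Pi.zero_apply]
          positivity)]
    congr 1
    ext y
    have := hgp y
    rw [Pi.mul_apply, ← ENNReal.ofReal_mul (by positivity)]
    congr 1
    field_simp
  have hEv : volume E = ENNReal.ofReal ((∫ x, h x) / (M * ∫ x, g x)) := by
    have := key Set.univ MeasurableSet.univ
    simpa using this
  have hpos : 0 < (∫ x, h x) / (M * ∫ x, g x) := by positivity
  refine ⟨by rw [hE]; exact Filter.EventuallyEq.refl _ _, hEv, by rw [hEv]; exact ENNReal.ofReal_pos.2 hpos, ?_⟩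
  intro A hA
  rw [key A hA, hEv, ← ENNReal.ofReal_div_of_pos hpos]
  congr 1
  field_simp
end

section
/- (Series expansion for the drifted two-barrier density integral.) Fix barriers z1 < z2 in ℝ with z = z2 − z1, β1, β2 ∈ (−1,1), and μ ∈ ℝ with β1μ > 0 and β2μ > 0. For x, y ∈ ℝ let a_1, a_2, a_3, a_4 be as below and let c_j(y,μ; iw) = (iw)² c_{j,0}(y) + iwμ c_{j,1}(y) + μ² c_{j,2}(y) with the coefficient tables below. Then for every t > 0 and x, y ∈ ℝ: −(1/2π) ∫_ℝ e^{−w²t/2} e^{−iw|x−y|} ( Σ_{j=1}^4 c_j(y,μ;iw) e^{−iw a_j(x,y)} ) / ( β1β2 e^{−2iwz}(w²+μ²) + (w − iβ1μ)(w − iβ2μ) ) dw = Σ_{k=0}^∞ (−β1β2)^k Σ_{j=1}^4 (1/2π) ∫_ℝ e^{−w²t/2} · ( − c_j(y,μ;iw) (w²+μ²)^k / [(w − iβ1μ)(w − iβ2μ)]^{k+1} ) · e^{−iw(a_j(x,y) + 2zk + |x−y|)} dw, where the integrals and the series converge absolutely. -/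
open Complex MeasureTheory

/-- The coefficient table c_{j,h}(y) for the drifted (β1,β2)-SBM. -/
noncomputable def cTab (z1 z2 β1 β2 y : ℝ) : Fin 4 → Fin 3 → ℝ :=
  let i1 : ℝ := if z1 ≤ y then 1 else 0
  let i2 : ℝ := if z2 ≤ y then 1 else 0
  let i12 : ℝ := if z1 ≤ y ∧ y < z2 then 1 else 0
  let c20 : ℝ := (2 * i1 - 1) * β1
  let c30 : ℝ := (2 * i2 - 1) * β2
  let c40 : ℝ := (1 - 2 * i12) * (β1 * β2)
  ![![1, β1 + β2, β1 * β2],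
    ![c20, -β1 - c40, β1 * c30],
    ![c30, -β2 + c40, -β2 * c20],
    ![c40, 0, -c40]]

/-- c_j(y,μ;ξ) = ξ² c_{j,0}(y) + ξ μ c_{j,1}(y) + μ² c_{j,2}(y). -/
noncomputable def cPoly (z1 z2 β1 β2 y μ : ℝ) (j : Fin 4) (ξ : ℂ) : ℂ :=
  ξ ^ 2 * (cTab z1 z2 β1 β2 y j 0) + ξ * μ * (cTab z1 z2 β1 β2 y j 1) +
    (μ : ℂ) ^ 2 * (cTab z1 z2 β1 β2 y j 2)


theorem shift_aux (f : ℂ → ℂ) (m : ℝ) (hm : 0 ≤ m) (g : ℝ → ℝ) (hg : Integrable g)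
    (hgt : Filter.Tendsto g Filter.atTop (nhds 0)) (hgb : Filter.Tendsto g Filter.atBot (nhds 0))
    (hd : ∀ w : ℂ, -m ≤ w.im → w.im ≤ 0 → DifferentiableAt ℂ f w)
    (hb : ∀ w : ℂ, -m ≤ w.im → w.im ≤ 0 → ‖f w‖ ≤ g w.re) :
    ∫ u : ℝ, f u = ∫ u : ℝ, f (u + (-m : ℝ) * I) := by
  have hint : ∀ s : ℝ, -m ≤ s → s ≤ 0 → Integrable (fun u : ℝ => f (u + s * I)) := by
    intro s h1 h2
    refine hg.mono' ?_ ?_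
    · apply Continuous.aestronglyMeasurable
      rw [continuous_iff_continuousAt]
      intro u
      have : ContinuousAt f (u + s * I) := (hd _ (by simpa using h1) (by simpa using h2)).continuousAt
      exact ContinuousAt.comp (f := fun u : ℝ => (u + s * I : ℂ)) this (by fun_prop)
    · exact Filter.Eventually.of_forall fun u => by
        simpa using hb (u + s * I) (by simpa using h1) (by simpa using h2)
  have key : ∀ R : ℝ, (∫ u in (-R)..R, f (u + (-m : ℝ) * I)) - (∫ u in (-R)..R, f (u + (0 : ℝ) * I))
      = -(I • ∫ y in (-m)..0, f (R + y * I)) + I • ∫ y in (-m)..0, f ((-R : ℝ) + y * I) := by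
    intro R
    have := Complex.integral_boundary_rect_eq_zero_of_differentiableOn f (⟨-R, -m⟩) (⟨R, 0⟩) (by
      intro w hw
      rw [mem_reProdIm] at hw
      have h2 := hw.2
      simp only [Set.uIcc_of_le (show -m ≤ 0 by linarith)] at h2
      exact (hd w h2.1 h2.2).differentiableWithinAt)
    simp only at this
    linear_combination this
  have hv : ∀ R : ℝ, ‖∫ y in (-m)..0, f (R + y * I)‖ ≤ g R * m := by
    intro R
    have := intervalIntegral.norm_integral_le_of_norm_le_const (a := -m) (b := 0) (C := g R) (f := fun y : ℝ => f (R + y * I)) (by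
      intro y hy
      rw [Set.uIoc_of_le (by linarith)] at hy
      simpa using hb (R + y * I) (by simpa using hy.1.le) (by simpa using hy.2))
    simpa [abs_of_nonneg hm] using this
  have hv1 : Filter.Tendsto (fun R : ℝ => ∫ y in (-m)..0, f (R + y * I)) Filter.atTop (nhds 0) :=
    squeeze_zero_norm hv (by simpa using hgt.mul_const m)
  have hv2 : Filter.Tendsto (fun R : ℝ => ∫ y in (-m)..0, f ((-R : ℝ) + y * I)) Filter.atTop (nhds 0) :=
    squeeze_zero_norm (fun R => hv (-R)) (by simpa using (hgb.comp Filter.tendsto_neg_atTop_atBot).mul_const m)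
  have h1 := intervalIntegral_tendsto_integral (hint (-m) le_rfl (by linarith)) Filter.tendsto_neg_atTop_atBot Filter.tendsto_id
  have h2 := intervalIntegral_tendsto_integral (hint 0 (by linarith) le_rfl) Filter.tendsto_neg_atTop_atBot Filter.tendsto_id
  have h3 := h1.sub h2
  have h4 : Filter.Tendsto (fun R : ℝ => -(I • ∫ y in (-m)..0, f (R + y * I)) + I • ∫ y in (-m)..0, f ((-R : ℝ) + y * I)) Filter.atTop (nhds 0) := by
    simpa using (hv1.const_smul I).neg.add (hv2.const_smul I)
  have h5 := tendsto_nhds_unique (h3.congr (fun R => key R)) h4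
  rw [sub_eq_zero] at h5
  rw [h5]; simp

theorem gauss_int (C b : ℝ) (hb : 0 < b) :
    Integrable (fun u : ℝ => C * ((1 + u ^ 2) * Real.exp (-b * u ^ 2))) := by
  apply Integrable.const_mul
  have h1 := integrable_exp_neg_mul_sq hb
  have h2 := integrable_rpow_mul_exp_neg_mul_sq hb (s := 2) (by norm_num)
  refine (h1.add h2).congr (Filter.Eventually.of_forall fun u => ?_)
  simp; ring

theorem gauss_lim (C b : ℝ) (hb : 0 < b) :
    Filter.Tendsto (fun u : ℝ => C * ((1 + u ^ 2) * Real.exp (-b * u ^ 2))) (Filter.cocompact ℝ) (nhds 0) := by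
  have h1 := tendsto_rpow_abs_mul_exp_neg_mul_sq_cocompact hb 0
  have h2 := tendsto_rpow_abs_mul_exp_neg_mul_sq_cocompact hb 2
  have := (h1.add h2).const_mul C
  simp only [add_zero, mul_zero] at this
  refine this.congr fun u => ?_
  simp only [Real.rpow_zero, Real.rpow_two, sq_abs]; ring

theorem decay_aux (h q : ℂ → ℂ) (m : ℝ) (hm : 0 ≤ m) (C b ρ : ℝ) (hb : 0 < b) (hC : 0 ≤ C)
    (hdh : ∀ w : ℂ, -m ≤ w.im → w.im ≤ 0 → DifferentiableAt ℂ h w)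
    (hdq : ∀ w : ℂ, -m ≤ w.im → w.im ≤ 0 → DifferentiableAt ℂ q w)
    (hbh : ∀ w : ℂ, -m ≤ w.im → w.im ≤ 0 → ‖h w‖ ≤ C * ((1 + w.re ^ 2) * Real.exp (-b * w.re ^ 2)))
    (hbq : ∀ w : ℂ, -m ≤ w.im → w.im ≤ 0 → ‖q w‖ ≤ 1)
    (hρ : ∀ w : ℂ, w.im = -m → ‖q w‖ ≤ ρ) (k : ℕ) :
    Integrable (fun u : ℝ => h u * q u ^ k) ∧
    ‖∫ u : ℝ, h u * q u ^ k‖ ≤ (∫ u : ℝ, C * ((1 + u ^ 2) * Real.exp (-b * u ^ 2))) * ρ ^ k := by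
  have hB : ∀ w : ℂ, -m ≤ w.im → w.im ≤ 0 → ‖h w * q w ^ k‖ ≤ C * ((1 + w.re ^ 2) * Real.exp (-b * w.re ^ 2)) := by
    intro w h1 h2
    rw [norm_mul, norm_pow]
    have := pow_le_one₀ (n := k) (norm_nonneg _) (hbq w h1 h2)
    calc _ ≤ ‖h w‖ * 1 := by gcongr
      _ ≤ _ := by simpa using hbh w h1 h2
  have hD : ∀ w : ℂ, -m ≤ w.im → w.im ≤ 0 → DifferentiableAt ℂ (fun w => h w * q w ^ k) w :=
    fun w h1 h2 => (hdh w h1 h2).mul ((hdq w h1 h2).pow k)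
  have hl := gauss_lim C b hb
  constructor
  · refine (gauss_int C b hb).mono' ?_ ?_
    · apply Continuous.aestronglyMeasurable
      rw [continuous_iff_continuousAt]
      intro u
      exact ContinuousAt.comp (f := fun u : ℝ => (u : ℂ)) (g := fun w => h w * q w ^ k)
        (hD u (by simpa using hm) (by simp)).continuousAt (by fun_prop)
    · exact Filter.Eventually.of_forall fun u => by
        simpa using hB u (by simpa using hm) (by simp)
  · rw [shift_aux (fun w => h w * q w ^ k) m hm _ (gauss_int C b hb)
      (hl.mono_left atTop_le_cocompact) (hl.mono_left atBot_le_cocompact) hD hB, ← integral_mul_const]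
    refine norm_integral_le_of_norm_le ((gauss_int C b hb).mul_const _) (Filter.Eventually.of_forall fun u => ?_)
    have h1 := hbh (u + (-m : ℝ) * I) (by simp) (by simpa using hm)
    have h2 := hρ (u + (-m : ℝ) * I) (by simp)
    simp only [norm_mul, norm_pow]
    gcongr
    simpa using h1

theorem norm_cmp (c d e f b : ℝ) (h : b ^ 2 * (c ^ 2 + d ^ 2) ≤ e ^ 2 + f ^ 2) :
    |b| * ‖(⟨c, d⟩ : ℂ)‖ ≤ ‖(⟨e, f⟩ : ℂ)‖ := by
  apply le_of_sq_le_sq _ (norm_nonneg _)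
  rw [mul_pow, sq_abs, Complex.sq_norm, Complex.sq_norm, normSq_apply, normSq_apply]
  simp only
  nlinarith

theorem sub_I_eq (w : ℂ) (a : ℝ) : w - I * a = ⟨w.re, w.im - a⟩ := by
  apply Complex.ext <;> simp
theorem add_I_eq (w : ℂ) (a : ℝ) : w + I * a = ⟨w.re, w.im + a⟩ := by
  apply Complex.ext <;> simp

theorem bm_eq (β μ : ℝ) (h : 0 < β * μ) : β * μ = |β| * |μ| := by
  rw [← abs_mul, abs_of_pos h]

theorem facB1 (β μ : ℝ) (h : 0 < β * μ) (w : ℂ) (h2 : w.im ≤ 0) :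
    β * μ ≤ ‖w - I * (β * μ)‖ := by
  have := Complex.abs_im_le_norm (w - I * (β * μ : ℝ))
  push_cast at this
  refine le_trans ?_ this
  simp
  rw [abs_of_nonpos (by linarith)]
  linarith

theorem facB2 (β μ : ℝ) (hβ : β ∈ Set.Ioo (-1 : ℝ) 1) (h : 0 < β * μ) (w : ℂ) (h2 : w.im ≤ 0) :
    |β| * ‖w - I * |μ|‖ ≤ ‖w - I * (β * μ)‖ := by
  have hb : |β| < 1 := abs_lt.2 hβ
  have e : w - I * (β * μ) = w - I * (β * μ : ℝ) := by push_cast; rfl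
  rw [e, sub_I_eq, sub_I_eq]
  apply norm_cmp
  rw [bm_eq β μ h, ← sq_abs β]
  have h0 := abs_nonneg β
  have h1 := abs_nonneg μ
  generalize |β| = b at *
  generalize |μ| = m at *
  have e1 : b ^ 2 * w.re ^ 2 ≤ w.re ^ 2 := by
    have : b ^ 2 ≤ 1 := by nlinarith
    nlinarith [sq_nonneg w.re]
  have e2 : (b * (m - w.im)) ^ 2 ≤ (b * m - w.im) ^ 2 := by
    apply pow_le_pow_left₀
    · apply mul_nonneg h0; linarith
    · nlinarith
  nlinarith

theorem facB3 (β μ : ℝ) (hβ : β ∈ Set.Ioo (-1 : ℝ) 1) (h : 0 < β * μ) (w : ℂ) (h2 : w.im ≤ 0)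
    (h3 : -|μ| ≤ w.im) :
    |β| * ‖w + I * |μ|‖ ≤ ‖w - I * (β * μ)‖ := by
  have hb : |β| < 1 := abs_lt.2 hβ
  have e : w - I * (β * μ) = w - I * (β * μ : ℝ) := by push_cast; rfl
  rw [e, sub_I_eq, add_I_eq]
  apply norm_cmp
  rw [bm_eq β μ h, ← sq_abs β]
  have h0 := abs_nonneg β
  have h1 := abs_nonneg μ
  generalize |β| = b at *
  generalize |μ| = m at *
  have e1 : b ^ 2 * w.re ^ 2 ≤ w.re ^ 2 := by
    have : b ^ 2 ≤ 1 := by nlinarith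
    nlinarith [sq_nonneg w.re]
  have e2 : (b * (m + w.im)) ^ 2 ≤ (b * m - w.im) ^ 2 := by
    apply pow_le_pow_left₀
    · apply mul_nonneg h0; linarith
    · nlinarith
  nlinarith

theorem facB4 (β μ : ℝ) (w : ℂ) (h3 : w.im = -|μ|) :
    ‖w + I * |μ|‖ ≤ ‖w - I * (β * μ)‖ := by
  have e : w - I * (β * μ) = w - I * (β * μ : ℝ) := by push_cast; rfl
  rw [e, sub_I_eq, add_I_eq]
  have := norm_cmp w.re (w.im + |μ|) w.re (w.im - β * μ) 1 (by
    rw [h3]; nlinarith [sq_nonneg (-|μ| - β * μ)])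
  simpa using this

theorem factor_sq (w : ℂ) (μ : ℝ) : w ^ 2 + (μ : ℂ) ^ 2 = (w - I * |μ|) * (w + I * |μ|) := by
  have : (μ : ℂ) ^ 2 = ((|μ| : ℝ) : ℂ) ^ 2 := by
    rw [← ofReal_pow, ← ofReal_pow, sq_abs]
  rw [this]
  linear_combination (((|μ| : ℝ) : ℂ) ^ 2) * I_sq

noncomputable def qF (β1 β2 μ z : ℝ) (w : ℂ) : ℂ :=
  -(β1 * β2 : ℂ) * Complex.exp (-2 * I * w * z) * (w ^ 2 + (μ : ℂ) ^ 2) /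
    ((w - I * (β1 * μ)) * (w - I * (β2 * μ)))

noncomputable def hF (β1 β2 μ t A c0 c1 c2 : ℝ) (w : ℂ) : ℂ :=
  Complex.exp (-w ^ 2 * t / 2) * (-((I * w) ^ 2 * c0 + I * w * μ * c1 + (μ : ℂ) ^ 2 * c2)) *
    Complex.exp (-I * w * A) / ((w - I * (β1 * μ)) * (w - I * (β2 * μ)))

theorem den_ne (β μ : ℝ) (h : 0 < β * μ) (w : ℂ) (h2 : w.im ≤ 0) : w - I * (β * μ) ≠ 0 := by
  rw [← norm_pos_iff]; exact lt_of_lt_of_le h (facB1 β μ h w h2)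

theorem qF_norm (β1 β2 μ z : ℝ) (w : ℂ) : ‖qF β1 β2 μ z w‖ =
    Real.exp (2 * z * w.im) * ((|β1| * ‖w - I * |μ|‖) * (|β2| * ‖w + I * |μ|‖)) /
     (‖w - I * (β1 * μ)‖ * ‖w - I * (β2 * μ)‖) := by
  unfold qF
  rw [factor_sq]
  simp only [norm_mul, norm_div, norm_neg, Complex.norm_exp]
  simp
  ring_nf

theorem qF_le (β1 β2 μ z : ℝ) (hz : 0 < z) (hβ1 : β1 ∈ Set.Ioo (-1 : ℝ) 1) (hβ2 : β2 ∈ Set.Ioo (-1 : ℝ) 1)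
    (hμ1 : 0 < β1 * μ) (hμ2 : 0 < β2 * μ) (w : ℂ) (h3 : -|μ| ≤ w.im) (h2 : w.im ≤ 0) :
    ‖qF β1 β2 μ z w‖ ≤ 1 := by
  rw [qF_norm]
  apply div_le_one_of_le₀ _ (by positivity)
  have : Real.exp (2 * z * w.im) ≤ 1 := by
    rw [Real.exp_le_one_iff]; nlinarith
  have e1 := facB2 β1 μ hβ1 hμ1 w h2
  have e2 := facB3 β2 μ hβ2 hμ2 w h2 h3
  calc _ ≤ 1 * (‖w - I * (β1 * μ)‖ * ‖w - I * (β2 * μ)‖) := by gcongr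
    _ = _ := one_mul _

theorem qF_le_bot (β1 β2 μ z : ℝ) (hz : 0 < z) (hβ1 : β1 ∈ Set.Ioo (-1 : ℝ) 1)
    (hμ1 : 0 < β1 * μ) (w : ℂ) (h3 : w.im = -|μ|) :
    ‖qF β1 β2 μ z w‖ ≤ |β2| := by
  rw [qF_norm]
  have h2 : w.im ≤ 0 := by rw [h3]; simp
  apply div_le_of_le_mul₀ (by positivity) (by positivity)
  have : Real.exp (2 * z * w.im) ≤ 1 := by
    rw [Real.exp_le_one_iff]; nlinarith
  have e1 := facB2 β1 μ hβ1 hμ1 w h2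
  have e2 := facB4 β2 μ w h3
  calc _ ≤ 1 * (‖w - I * (β1 * μ)‖ * (|β2| * ‖w - I * (β2 * μ)‖)) := by gcongr
    _ = _ := by ring

theorem qF_lt (β1 β2 μ z : ℝ) (hβ1 : β1 ∈ Set.Ioo (-1 : ℝ) 1) (hβ2 : β2 ∈ Set.Ioo (-1 : ℝ) 1)
    (hμ1 : 0 < β1 * μ) (hμ2 : 0 < β2 * μ) (w : ℝ) (hw : w ≠ 0) :
    ‖qF β1 β2 μ z w‖ < 1 := by
  rw [qF_norm]
  have p1 := norm_pos_iff.2 (den_ne β1 μ hμ1 w (by simp))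
  have p2 := norm_pos_iff.2 (den_ne β2 μ hμ2 w (by simp))
  rw [div_lt_one (by positivity)]
  have e2 := facB3 β2 μ hβ2 hμ2 w (by simp) (by simp)
  have e1 : |β1| * ‖(w : ℂ) - I * |μ|‖ < ‖(w : ℂ) - I * (β1 * μ)‖ := by
    have e : (w : ℂ) - I * (β1 * μ) = w - I * (β1 * μ : ℝ) := by push_cast; rfl
    rw [e, sub_I_eq, sub_I_eq]
    apply lt_of_pow_lt_pow_left₀ 2 (norm_nonneg _)
    rw [mul_pow, sq_abs, Complex.sq_norm, Complex.sq_norm, normSq_apply, normSq_apply]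
    simp
    have h5 : β1 ^ 2 < 1 := by nlinarith [hβ1.1, hβ1.2]
    have h6 : 0 < w ^ 2 := by positivity
    nlinarith
  simp only [ofReal_im, mul_zero, Real.exp_zero, one_mul]
  exact mul_lt_mul e1 e2 (by
    have : w + I * (|μ| : ℝ) ≠ 0 := by
      intro h
      have := congrArg Complex.re h
      simp at this
      exact hw this
    have hb2 : β2 ≠ 0 := by rintro rfl; simp at hμ2
    positivity) p1.le

theorem hF_le (β1 β2 μ t A c0 c1 c2 : ℝ) (ht : 0 < t) (hμ1 : 0 < β1 * μ) (hμ2 : 0 < β2 * μ) :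
    ∃ C : ℝ, 0 ≤ C ∧ ∀ w : ℂ, -|μ| ≤ w.im → w.im ≤ 0 →
    ‖hF β1 β2 μ t A c0 c1 c2 w‖ ≤ C * ((1 + w.re ^ 2) * Real.exp (-(t / 2) * w.re ^ 2)) := by
  refine ⟨Real.exp (μ ^ 2 * t / 2) * ((1 + μ ^ 2) * (|c0| + |μ| * |c1| + μ ^ 2 * |c2|)) * Real.exp (|A| * |μ|) /
    ((β1 * μ) * (β2 * μ)), by positivity, fun w h3 h2 => ?_⟩
  have f1 := facB1 β1 μ hμ1 w h2
  have f2 := facB1 β2 μ hμ2 w h2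
  have him : w.im ^ 2 ≤ μ ^ 2 := by
    rw [← sq_abs μ]; nlinarith
  unfold hF
  rw [norm_div, norm_mul, norm_mul, norm_mul]
  have g1 : ‖Complex.exp (-w ^ 2 * t / 2)‖ ≤ Real.exp (μ ^ 2 * t / 2) * Real.exp (-(t / 2) * w.re ^ 2) := by
    rw [Complex.norm_exp, ← Real.exp_add, Real.exp_le_exp]
    have : (-w ^ 2 * t / 2).re = (w.im ^ 2 - w.re ^ 2) * t / 2 := by
      simp [pow_two]
      ring
    rw [this]
    nlinarith
  have g2 : ‖Complex.exp (-I * w * A)‖ ≤ Real.exp (|A| * |μ|) := by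
    rw [Complex.norm_exp, Real.exp_le_exp]
    have : (-I * w * A).re = w.im * A := by simp
    rw [this]
    calc _ ≤ |w.im * A| := le_abs_self _
      _ = |A| * |w.im| := by rw [abs_mul, mul_comm]
      _ ≤ _ := mul_le_mul_of_nonneg_left (by rw [abs_of_nonpos h2]; linarith) (abs_nonneg _)
  have hw2 : ‖w‖ ^ 2 ≤ w.re ^ 2 + μ ^ 2 := by
    rw [Complex.sq_norm, normSq_apply]; nlinarith
  have hw3 : ‖w‖ ^ 2 ≤ (1 + μ ^ 2) * (1 + w.re ^ 2) := by nlinarith [mul_nonneg (sq_nonneg μ) (sq_nonneg w.re)]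
  have hw4 : ‖w‖ ≤ (1 + μ ^ 2) * (1 + w.re ^ 2) := by
    nlinarith [mul_nonneg (sq_nonneg μ) (sq_nonneg w.re), sq_nonneg (‖w‖ - 1), sq_nonneg μ, sq_nonneg w.re]
  have hw5 : 1 ≤ (1 + μ ^ 2) * (1 + w.re ^ 2) := by
    nlinarith [mul_nonneg (sq_nonneg μ) (sq_nonneg w.re), sq_nonneg μ, sq_nonneg w.re]
  have g3 : ‖-((I * w) ^ 2 * c0 + I * w * μ * c1 + (μ : ℂ) ^ 2 * c2)‖ ≤
      (1 + μ ^ 2) * (1 + w.re ^ 2) * (|c0| + |μ| * |c1| + μ ^ 2 * |c2|) := by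
    rw [norm_neg]
    refine (norm_add₃_le).trans ?_
    simp only [norm_mul, norm_pow, norm_I, one_mul, Complex.norm_real, Real.norm_eq_abs, sq_abs]
    calc _ ≤ ((1 + μ ^ 2) * (1 + w.re ^ 2)) * |c0| + ((1 + μ ^ 2) * (1 + w.re ^ 2)) * |μ| * |c1| +
          ((1 + μ ^ 2) * (1 + w.re ^ 2)) * (μ ^ 2 * |c2|) := by
          refine add_le_add (by gcongr) (le_mul_of_one_le_left (by positivity) hw5)
      _ = _ := by ring
  calc _ ≤ (Real.exp (μ ^ 2 * t / 2) * Real.exp (-(t / 2) * w.re ^ 2)) *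
      ((1 + μ ^ 2) * (1 + w.re ^ 2) * (|c0| + |μ| * |c1| + μ ^ 2 * |c2|)) * Real.exp (|A| * |μ|) /
      ((β1 * μ) * (β2 * μ)) := by gcongr
    _ = _ := by ring

/-- decay of the terms -/
theorem term_decay (β1 β2 μ z t A c0 c1 c2 : ℝ) (hz : 0 < z) (ht : 0 < t)
    (hβ1 : β1 ∈ Set.Ioo (-1 : ℝ) 1) (hβ2 : β2 ∈ Set.Ioo (-1 : ℝ) 1)
    (hμ1 : 0 < β1 * μ) (hμ2 : 0 < β2 * μ) : ∃ C : ℝ, ∀ k : ℕ,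
    Integrable (fun u : ℝ => hF β1 β2 μ t A c0 c1 c2 u * qF β1 β2 μ z u ^ k) ∧
    ‖∫ u : ℝ, hF β1 β2 μ t A c0 c1 c2 u * qF β1 β2 μ z u ^ k‖ ≤ C * |β2| ^ k := by
  obtain ⟨C, hC, hb⟩ := hF_le β1 β2 μ t A c0 c1 c2 ht hμ1 hμ2
  refine ⟨_, fun k => decay_aux _ _ |μ| (abs_nonneg _) C (t / 2) |β2| (by positivity) hC ?_ ?_ hb
    (qF_le β1 β2 μ z hz hβ1 hβ2 hμ1 hμ2) (qF_le_bot β1 β2 μ z hz hβ1 hμ1) k⟩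
  · intro w h3 h2
    have p1 := den_ne β1 μ hμ1 w h2
    have p2 := den_ne β2 μ hμ2 w h2
    unfold hF
    exact DifferentiableAt.div (by fun_prop) (by fun_prop) (mul_ne_zero p1 p2)
  · intro w h3 h2
    have p1 := den_ne β1 μ hμ1 w h2
    have p2 := den_ne β2 μ hμ2 w h2
    unfold qF
    exact DifferentiableAt.div (by fun_prop) (by fun_prop) (mul_ne_zero p1 p2)

noncomputable def dN (β1 β2 μ z : ℝ) (w : ℂ) : ℂ :=
  (β1 * β2 : ℂ) * Complex.exp (-2 * Complex.I * w * z) * (w ^ 2 + (μ : ℂ) ^ 2) +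
    (w - Complex.I * (β1 * μ)) * (w - Complex.I * (β2 * μ))

theorem dN_lower (β1 β2 μ z : ℝ) (hz : 0 < z)
    (hβ1 : β1 ∈ Set.Ioo (-1 : ℝ) 1) (hβ2 : β2 ∈ Set.Ioo (-1 : ℝ) 1)
    (hμ1 : 0 < β1 * μ) (hμ2 : 0 < β2 * μ) :
    ∃ c : ℝ, 0 < c ∧ ∀ w : ℝ, c * |w| ≤ ‖dN β1 β2 μ z w‖ := by
  have hμ : 0 < μ ^ 2 := by
    have : μ ≠ 0 := by rintro rfl; simp at hμ1
    positivity
  have hbb : 0 < β1 * β2 := by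
    have : 0 < (β1 * β2) * μ ^ 2 := by nlinarith [mul_pos hμ1 hμ2]
    exact pos_of_mul_pos_left this hμ.le
  have hb1 : β1 * β2 < 1 := by
    have h1 := abs_lt.2 hβ1
    have h2 := abs_lt.2 hβ2
    calc β1 * β2 ≤ |β1 * β2| := le_abs_self _
      _ = |β1| * |β2| := abs_mul _ _
      _ < 1 := by nlinarith [abs_nonneg β1, abs_nonneg β2]
  refine ⟨min (β1 * μ + β2 * μ) ((1 - β1 * β2) * (Real.pi / (2 * z))), lt_min (by positivity)
    (mul_pos (by linarith) (by positivity)), fun w => ?_⟩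
  by_cases hw : |w| ≤ Real.pi / (2 * z)
  · refine le_trans ?_ (Complex.abs_im_le_norm _)
    have him : (dN β1 β2 μ z w).im =
        -(β1 * β2 * Real.sin (2 * w * z) * (w ^ 2 + μ ^ 2) + w * (β1 * μ + β2 * μ)) := by
      unfold dN
      have e : (-2 * I * (w : ℂ) * z) = ((-(2 * w * z) : ℝ) : ℂ) * I := by push_cast; ring
      rw [e, Complex.exp_mul_I, ← ofReal_cos, ← ofReal_sin, Real.sin_neg]
      generalize Real.sin (2 * w * z) = S
      generalize Real.cos (-(2 * w * z)) = S'
      simp [pow_two]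
      ring
    rw [him, abs_neg]
    have hs : 0 ≤ w * Real.sin (2 * w * z) := by
      rw [le_div_iff₀ (by positivity)] at hw
      rcases le_total 0 w with h | h
      · rw [abs_of_nonneg h] at hw
        exact mul_nonneg h (Real.sin_nonneg_of_nonneg_of_le_pi (by positivity) (by linarith))
      · rw [abs_of_nonpos h] at hw
        exact mul_nonneg_of_nonpos_of_nonpos h (Real.sin_nonpos_of_nonpos_of_neg_pi_le (by nlinarith) (by linarith))
    have h1 : min (β1 * μ + β2 * μ) ((1 - β1 * β2) * (Real.pi / (2 * z))) * |w| ≤ (β1 * μ + β2 * μ) * |w| := by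
      gcongr; exact min_le_left _ _
    refine h1.trans ?_
    have h3 : 0 < β1 * μ + β2 * μ := by positivity
    rw [← abs_of_pos h3, ← abs_mul]
    apply sq_le_sq.1
    rw [abs_of_pos h3]
    set S := Real.sin (2 * w * z)
    have h4 : 0 ≤ (β1 * β2 * (w ^ 2 + μ ^ 2) * (β1 * μ + β2 * μ)) * (w * S) := by positivity
    nlinarith [sq_nonneg (β1 * β2 * S * (w ^ 2 + μ ^ 2))]
  · push Not at hw
    have h1 : min (β1 * μ + β2 * μ) ((1 - β1 * β2) * (Real.pi / (2 * z))) * |w| ≤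
        ((1 - β1 * β2) * (Real.pi / (2 * z))) * |w| := by
      gcongr; exact min_le_right _ _
    have h2 : ((1 - β1 * β2) * (Real.pi / (2 * z))) * |w| ≤ (1 - β1 * β2) * w ^ 2 := by
      rw [← sq_abs w, pow_two, mul_assoc]
      have : 0 < 1 - β1 * β2 := by linarith
      gcongr
    refine h1.trans (h2.trans ?_)
    have h3 : ‖(β1 * β2 : ℂ) * Complex.exp (-2 * Complex.I * w * z) * ((w : ℂ) ^ 2 + (μ : ℂ) ^ 2)‖
        = β1 * β2 * (w ^ 2 + μ ^ 2) := by
      have e : (-2 * I * (w : ℂ) * z) = ((-(2 * w * z) : ℝ) : ℂ) * I := by push_cast; ring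
      have e2 : (w : ℂ) ^ 2 + (μ : ℂ) ^ 2 = ((w ^ 2 + μ ^ 2 : ℝ) : ℂ) := by push_cast; rfl
      have e3 : (β1 * β2 : ℂ) = ((β1 * β2 : ℝ) : ℂ) := by push_cast; rfl
      rw [norm_mul, norm_mul, e, Complex.norm_exp_ofReal_mul_I, e2, e3, Complex.norm_real, Complex.norm_real,
        Real.norm_of_nonneg hbb.le, Real.norm_of_nonneg (by positivity), mul_one]
    have h4 : w ^ 2 + β1 * β2 * μ ^ 2 ≤ ‖((w : ℂ) - Complex.I * (β1 * μ)) * (w - Complex.I * (β2 * μ))‖ := by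
      apply le_of_sq_le_sq _ (norm_nonneg _)
      have e1 : (w : ℂ) - I * (β1 * μ) = w - I * (β1 * μ : ℝ) := by push_cast; rfl
      have e2 : (w : ℂ) - I * (β2 * μ) = w - I * (β2 * μ : ℝ) := by push_cast; rfl
      rw [norm_mul, mul_pow, e1, e2, sub_I_eq, sub_I_eq, Complex.sq_norm, Complex.sq_norm, normSq_apply, normSq_apply]
      simp
      nlinarith [sq_nonneg (w * (β1 * μ - β2 * μ))]
    have h5 := norm_sub_le_norm_add
      (((w : ℂ) - Complex.I * (β1 * μ)) * (w - Complex.I * (β2 * μ)))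
      ((β1 * β2 : ℂ) * Complex.exp (-2 * Complex.I * w * z) * ((w : ℂ) ^ 2 + (μ : ℂ) ^ 2))
    unfold dN
    rw [add_comm]
    rw [h3] at h5
    linarith

theorem num_term (μ a c0 c1 c2 w : ℝ) :
    ‖((I * w) ^ 2 * c0 + I * w * μ * c1 + (μ : ℂ) ^ 2 * c2) * Complex.exp (-I * w * a) - (μ : ℂ) ^ 2 * c2‖ ≤
      (|c0| + |μ * c1| + |μ ^ 2 * c2 * a|) * (|w| * (1 + |w|)) := by
  have e0 : -I * (w : ℂ) * a = I * ((-(w * a) : ℝ) : ℂ) := by push_cast; ring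
  have e1 : ‖Complex.exp (-I * w * a) - 1‖ ≤ |w| * |a| := by
    rw [e0]
    refine (Real.norm_exp_I_mul_ofReal_sub_one_le).trans ?_
    rw [norm_neg, norm_mul]; rfl
  have e2 : ‖Complex.exp (-I * w * a)‖ = 1 := by
    rw [e0, mul_comm, Complex.norm_exp_ofReal_mul_I]
  have e3 : ((I * w) ^ 2 * c0 + I * w * μ * c1 + (μ : ℂ) ^ 2 * c2) * Complex.exp (-I * w * a) - (μ : ℂ) ^ 2 * c2
    = (I * w) ^ 2 * c0 * Complex.exp (-I * w * a) + I * w * μ * c1 * Complex.exp (-I * w * a) +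
      (μ : ℂ) ^ 2 * c2 * (Complex.exp (-I * w * a) - 1) := by ring
  rw [e3]
  refine (norm_add₃_le).trans ?_
  simp only [norm_mul, norm_pow, norm_I, one_mul, Complex.norm_real, Real.norm_eq_abs, sq_abs, e2, abs_mul, abs_pow, mul_one]
  rw [← sq_abs w]
  calc _ ≤ |w| ^ 2 * |c0| + |w| * |μ| * |c1| + μ ^ 2 * |c2| * (|w| * |a|) := by gcongr
    _ ≤ _ := by
      have : 0 ≤ |w| * |c0| + |w| ^ 2 * (|μ| * |c1|) + |w| ^ 2 * (μ ^ 2 * |c2| * |a|) := by positivity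
      nlinarith

theorem F_integrable (β1 β2 μ z t A : ℝ) (hz : 0 < z) (ht : 0 < t)
    (hβ1 : β1 ∈ Set.Ioo (-1 : ℝ) 1) (hβ2 : β2 ∈ Set.Ioo (-1 : ℝ) 1)
    (hμ1 : 0 < β1 * μ) (hμ2 : 0 < β2 * μ) (a : Fin 4 → ℝ) (c : Fin 4 → Fin 3 → ℝ)
    (hc : ∑ j, c j 2 = 0) :
    Integrable (fun w : ℝ => Complex.exp (-(w : ℂ) ^ 2 * t / 2) * Complex.exp (-Complex.I * w * A) *
          (∑ j : Fin 4, ((I * w) ^ 2 * c j 0 + I * w * μ * c j 1 + (μ : ℂ) ^ 2 * c j 2) *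
            Complex.exp (-Complex.I * w * a j)) / dN β1 β2 μ z w) := by
  obtain ⟨d, hd, hdN⟩ := dN_lower β1 β2 μ z hz hβ1 hβ2 hμ1 hμ2
  have hN : ∀ w : ℝ, ‖∑ j : Fin 4, ((I * w) ^ 2 * c j 0 + I * w * μ * c j 1 + (μ : ℂ) ^ 2 * c j 2) *
            Complex.exp (-Complex.I * w * a j)‖ ≤ (∑ j, (|c j 0| + |μ * c j 1| + |μ ^ 2 * c j 2 * a j|)) * (|w| * (1 + |w|)) := by
    intro w
    have : ∑ j : Fin 4, ((I * w) ^ 2 * c j 0 + I * w * μ * c j 1 + (μ : ℂ) ^ 2 * c j 2) *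
            Complex.exp (-Complex.I * w * a j) = ∑ j : Fin 4, (((I * w) ^ 2 * c j 0 + I * w * μ * c j 1 + (μ : ℂ) ^ 2 * c j 2) *
            Complex.exp (-Complex.I * w * a j) - (μ : ℂ) ^ 2 * c j 2) := by
      rw [Finset.sum_sub_distrib, ← Finset.mul_sum, ← ofReal_sum, hc]; simp
    rw [this, Finset.sum_mul]
    exact norm_sum_le_of_le _ fun j _ => num_term _ _ _ _ _ _
  set K := ∑ j, (|c j 0| + |μ * c j 1| + |μ ^ 2 * c j 2 * a j|) with hK
  have hK0 : 0 ≤ K := Finset.sum_nonneg fun j _ => by positivity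
  refine (gauss_int (2 * K / d) (t / 2) (by positivity)).mono' ?_ (Filter.Eventually.of_forall fun w => ?_)
  · apply Measurable.aestronglyMeasurable
    unfold dN
    apply Measurable.div <;> exact Continuous.measurable (by fun_prop)
  · rw [norm_div, norm_mul, norm_mul]
    have g1 : ‖Complex.exp (-(w : ℂ) ^ 2 * t / 2)‖ = Real.exp (-(t / 2) * w ^ 2) := by
      have : -(w : ℂ) ^ 2 * t / 2 = ((-(t / 2) * w ^ 2 : ℝ) : ℂ) := by push_cast; ring
      rw [this, Complex.norm_exp_ofReal]
    have g2 : ‖Complex.exp (-Complex.I * w * A)‖ = 1 := by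
      have e0 : -I * (w : ℂ) * A = ((-(w * A) : ℝ) : ℂ) * I := by push_cast; ring
      rw [e0, Complex.norm_exp_ofReal_mul_I]
    rw [g1, g2, mul_one]
    apply div_le_of_le_mul₀ (norm_nonneg _) (by positivity)
    have hw : 1 + |w| ≤ 2 * (1 + w ^ 2) := by
      rw [← sq_abs w]; nlinarith [sq_nonneg (|w| - 1)]
    calc _ ≤ Real.exp (-(t / 2) * w ^ 2) * (K * (|w| * (2 * (1 + w ^ 2)))) := by
          gcongr
          refine (hN w).trans ?_
          gcongr
      _ = 2 * K / d * ((1 + w ^ 2) * Real.exp (-(t / 2) * w ^ 2)) * (d * |w|) := by field_simp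
      _ ≤ _ := by gcongr; exact hdN w

theorem cTab_sum (z1 z2 β1 β2 y : ℝ) (hz : z1 < z2) : ∑ j, cTab z1 z2 β1 β2 y j 2 = 0 := by
  rw [Fin.sum_univ_four]
  simp only [cTab]
  simp
  by_cases h1 : z1 ≤ y <;> by_cases h2 : z2 ≤ y
  · simp [h1, h2, not_lt.2 h2]; ring
  · simp [h1, h2, not_le.1 h2]; ring
  · exact absurd (hz.le.trans h2) h1
  · simp [h1, h2]; ring

/-- series expansion for the drifted two-barrier density integral. -/
theorem series_expansion_drifted_two_barriers
    (z1 z2 : ℝ) (hz : z1 < z2) (β1 β2 : ℝ)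
    (hβ1 : β1 ∈ Set.Ioo (-1 : ℝ) 1) (hβ2 : β2 ∈ Set.Ioo (-1 : ℝ) 1)
    (μ : ℝ) (hμ1 : 0 < β1 * μ) (hμ2 : 0 < β2 * μ)
    (t : ℝ) (ht : 0 < t) (x y : ℝ) :
    Integrable (fun w : ℝ =>
        Complex.exp (-(w : ℂ) ^ 2 * t / 2) * Complex.exp (-Complex.I * w * |x - y|) *
          (∑ j : Fin 4, cPoly z1 z2 β1 β2 y μ j (Complex.I * w) *
            Complex.exp (-Complex.I * w * (aSBM z1 z2 x y j))) /
          ((β1 * β2 : ℂ) * Complex.exp (-2 * Complex.I * w * (z2 - z1)) *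
              ((w : ℂ) ^ 2 + (μ : ℂ) ^ 2) +
            ((w : ℂ) - Complex.I * (β1 * μ)) * ((w : ℂ) - Complex.I * (β2 * μ)))) ∧
    (∀ (k : ℕ) (j : Fin 4), Integrable (fun w : ℝ =>
        Complex.exp (-(w : ℂ) ^ 2 * t / 2) *
          (-(cPoly z1 z2 β1 β2 y μ j (Complex.I * w)) *
              ((w : ℂ) ^ 2 + (μ : ℂ) ^ 2) ^ k /
            (((w : ℂ) - Complex.I * (β1 * μ)) *
               ((w : ℂ) - Complex.I * (β2 * μ))) ^ (k + 1)) *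
          Complex.exp (-Complex.I * w * (aSBM z1 z2 x y j + 2 * (z2 - z1) * k + |x - y|)))) ∧
    Summable (fun k : ℕ =>
      ∑ j : Fin 4, ‖((-(β1 * β2) : ℝ) : ℂ) ^ k * ((1 / (2 * Real.pi) : ℂ) *
        ∫ w : ℝ,
          Complex.exp (-(w : ℂ) ^ 2 * t / 2) *
            (-(cPoly z1 z2 β1 β2 y μ j (Complex.I * w)) *
                ((w : ℂ) ^ 2 + (μ : ℂ) ^ 2) ^ k /
              (((w : ℂ) - Complex.I * (β1 * μ)) *
                 ((w : ℂ) - Complex.I * (β2 * μ))) ^ (k + 1)) *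
            Complex.exp (-Complex.I * w *
              (aSBM z1 z2 x y j + 2 * (z2 - z1) * k + |x - y|)))‖) ∧
    -(1 / (2 * Real.pi) : ℂ) *
        (∫ w : ℝ,
          Complex.exp (-(w : ℂ) ^ 2 * t / 2) * Complex.exp (-Complex.I * w * |x - y|) *
            (∑ j : Fin 4, cPoly z1 z2 β1 β2 y μ j (Complex.I * w) *
              Complex.exp (-Complex.I * w * (aSBM z1 z2 x y j))) /
            ((β1 * β2 : ℂ) * Complex.exp (-2 * Complex.I * w * (z2 - z1)) *
                ((w : ℂ) ^ 2 + (μ : ℂ) ^ 2) +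
              ((w : ℂ) - Complex.I * (β1 * μ)) * ((w : ℂ) - Complex.I * (β2 * μ)))) =
      ∑' k : ℕ, ((-(β1 * β2) : ℝ) : ℂ) ^ k *
        ∑ j : Fin 4, (1 / (2 * Real.pi) : ℂ) *
          ∫ w : ℝ,
            Complex.exp (-(w : ℂ) ^ 2 * t / 2) *
              (-(cPoly z1 z2 β1 β2 y μ j (Complex.I * w)) *
                  ((w : ℂ) ^ 2 + (μ : ℂ) ^ 2) ^ k /
                (((w : ℂ) - Complex.I * (β1 * μ)) *
                   ((w : ℂ) - Complex.I * (β2 * μ))) ^ (k + 1)) *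
              Complex.exp (-Complex.I * w *
                (aSBM z1 z2 x y j + 2 * (z2 - z1) * k + |x - y|)) := by
  have hz' : 0 < z2 - z1 := sub_pos.2 hz
  set q : ℝ → ℂ := fun w => qF β1 β2 μ (z2 - z1) w with hq
  set h : Fin 4 → ℝ → ℂ := fun j w => hF β1 β2 μ t (aSBM z1 z2 x y j + |x - y|)
    (cTab z1 z2 β1 β2 y j 0) (cTab z1 z2 β1 β2 y j 1) (cTab z1 z2 β1 β2 y j 2) w with hh
  have hdec : ∀ j, ∃ C : ℝ, ∀ k : ℕ, Integrable (fun u : ℝ => h j u * q u ^ k) ∧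
      ‖∫ u : ℝ, h j u * q u ^ k‖ ≤ C * |β2| ^ k := fun j =>
    term_decay β1 β2 μ (z2 - z1) t _ _ _ _ hz' ht hβ1 hβ2 hμ1 hμ2
  choose C hC using hdec
  have hbb : ((-(β1 * β2) : ℝ) : ℂ) ≠ 0 := by
    rw [ofReal_ne_zero, neg_ne_zero]
    rintro h0
    rcases mul_eq_zero.1 h0 with h0 | h0 <;> simp [h0] at hμ1 hμ2
  set f : ℕ → Fin 4 → ℝ → ℂ := fun k j w =>
    Complex.exp (-(w : ℂ) ^ 2 * t / 2) *
          (-(cPoly z1 z2 β1 β2 y μ j (Complex.I * w)) *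
              ((w : ℂ) ^ 2 + (μ : ℂ) ^ 2) ^ k /
            (((w : ℂ) - Complex.I * (β1 * μ)) *
               ((w : ℂ) - Complex.I * (β2 * μ))) ^ (k + 1)) *
          Complex.exp (-Complex.I * w * (aSBM z1 z2 x y j + 2 * (z2 - z1) * k + |x - y|)) with hf
  have hterm : ∀ k j w, ((-(β1 * β2) : ℝ) : ℂ) ^ k * f k j w = h j w * q w ^ k := by
    intro k j w
    simp only [hf, hh, hq, hF, qF, cPoly]
    have p1 := den_ne β1 μ hμ1 w (by simp)
    have p2 := den_ne β2 μ hμ2 w (by simp)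
    have e : Complex.exp (-Complex.I * w * (aSBM z1 z2 x y j + 2 * (z2 - z1) * k + |x - y|)) =
      Complex.exp (-I * w * ((aSBM z1 z2 x y j + |x - y| : ℝ) : ℂ)) *
        Complex.exp (-2 * I * w * ((z2 - z1 : ℝ) : ℂ)) ^ k := by
      rw [← Complex.exp_nat_mul, ← Complex.exp_add]
      congr 1
      push_cast
      ring
    have pd := mul_ne_zero p1 p2
    rw [e]
    have e5 : (-(β1 * β2 : ℂ)) = ((-(β1 * β2) : ℝ) : ℂ) := by push_cast; rfl
    rw [e5]
    generalize ((w : ℂ) - I * (β1 * μ)) * ((w : ℂ) - I * (β2 * μ)) = D at pd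
    generalize Complex.exp (-2 * I * w * ((z2 - z1 : ℝ) : ℂ)) = E1
    generalize (w : ℂ) ^ 2 + (μ : ℂ) ^ 2 = P
    generalize (I * (w : ℂ)) ^ 2 * (cTab z1 z2 β1 β2 y j 0) + I * w * μ * (cTab z1 z2 β1 β2 y j 1) +
      (μ : ℂ) ^ 2 * (cTab z1 z2 β1 β2 y j 2) = Q
    generalize ((-(β1 * β2) : ℝ) : ℂ) = B
    rw [div_pow, mul_pow, mul_pow, pow_succ]
    field_simp
    ring
  have hfi : ∀ k j, Integrable (f k j) := by
    intro k j
    refine (((hC j k).1).const_mul ((((-(β1 * β2) : ℝ) : ℂ) ^ k)⁻¹)).congr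
      (Filter.Eventually.of_forall fun w => ?_)
    simp only
    rw [← hterm, inv_mul_cancel_left₀ (pow_ne_zero _ hbb)]
  have hint : ∀ k j, ((-(β1 * β2) : ℝ) : ℂ) ^ k * ∫ w, f k j w = ∫ w, h j w * q w ^ k := by
    intro k j
    rw [← integral_const_mul]
    simp only [hterm]
  have hF0 := F_integrable β1 β2 μ (z2 - z1) t |x - y| hz' ht hβ1 hβ2 hμ1 hμ2
    (aSBM z1 z2 x y) (cTab z1 z2 β1 β2 y) (cTab_sum z1 z2 β1 β2 y hz)
  set F : ℝ → ℂ := fun w =>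
        Complex.exp (-(w : ℂ) ^ 2 * t / 2) * Complex.exp (-Complex.I * w * |x - y|) *
          (∑ j : Fin 4, cPoly z1 z2 β1 β2 y μ j (Complex.I * w) *
            Complex.exp (-Complex.I * w * (aSBM z1 z2 x y j))) /
          ((β1 * β2 : ℂ) * Complex.exp (-2 * Complex.I * w * (z2 - z1)) *
              ((w : ℂ) ^ 2 + (μ : ℂ) ^ 2) +
            ((w : ℂ) - Complex.I * (β1 * μ)) * ((w : ℂ) - Complex.I * (β2 * μ))) with hFdef
  have hFi : Integrable F := by
    refine hF0.congr (Filter.Eventually.of_forall fun w => ?_)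
    simp only [hFdef, dN, cPoly]
    push_cast
    rfl
  have hsumm : Summable (fun k : ℕ => ∑ j : Fin 4, ‖((-(β1 * β2) : ℝ) : ℂ) ^ k *
      ((1 / (2 * Real.pi) : ℂ) * ∫ w, f k j w)‖) := by
    refine summable_sum fun j _ => ?_
    refine Summable.of_nonneg_of_le (fun _ => norm_nonneg _) (fun k => ?_)
      ((summable_geometric_of_lt_one (abs_nonneg β2) (abs_lt.2 hβ2)).mul_left
        (‖(1 / (2 * Real.pi) : ℂ)‖ * C j))
    rw [mul_left_comm, hint, norm_mul, mul_assoc]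
    exact mul_le_mul_of_nonneg_left (hC j k).2 (norm_nonneg _)
  refine ⟨hFi, hfi, hsumm, ?_⟩
  -- relation between the geometric terms and F
  have hhF : ∀ w : ℝ, w ≠ 0 → ∑ j, h j w = -(F w * (1 - q w)) := by
    intro w hw
    have p1 := den_ne β1 μ hμ1 w (by simp)
    have p2 := den_ne β2 μ hμ2 w (by simp)
    have hq1 := qF_lt β1 β2 μ (z2 - z1) hβ1 hβ2 hμ1 hμ2 w hw
    have hdn : (β1 * β2 : ℂ) * Complex.exp (-2 * Complex.I * w * (z2 - z1)) *
              ((w : ℂ) ^ 2 + (μ : ℂ) ^ 2) +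
            ((w : ℂ) - Complex.I * (β1 * μ)) * ((w : ℂ) - Complex.I * (β2 * μ)) =
        (1 - q w) * (((w : ℂ) - Complex.I * (β1 * μ)) * ((w : ℂ) - Complex.I * (β2 * μ))) := by
      have pd := mul_ne_zero p1 p2
      simp only [hq, qF]
      push_cast
      generalize ((w : ℂ) - I * (β1 * μ)) * ((w : ℂ) - I * (β2 * μ)) = D at pd
      rw [sub_mul, div_mul_cancel₀ _ pd]
      ring
    have hne : 1 - q w ≠ 0 := by
      intro h0
      rw [sub_eq_zero] at h0
      simp only [hq] at h0
      rw [← h0] at hq1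
      simp at hq1
    simp only [hFdef]
    rw [hdn]
    have e : ∀ j, h j w = -(Complex.exp (-(w : ℂ) ^ 2 * t / 2) * Complex.exp (-Complex.I * w * |x - y|) /
      (((w : ℂ) - Complex.I * (β1 * μ)) * ((w : ℂ) - Complex.I * (β2 * μ)))) *
      (cPoly z1 z2 β1 β2 y μ j (Complex.I * w) * Complex.exp (-Complex.I * w * (aSBM z1 z2 x y j))) := by
      intro j
      simp only [hh, hF, cPoly]
      have e : Complex.exp (-I * w * ((aSBM z1 z2 x y j + |x - y| : ℝ) : ℂ)) =
        Complex.exp (-I * w * |x - y|) * Complex.exp (-I * w * (aSBM z1 z2 x y j)) := by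
        rw [← Complex.exp_add]
        congr 1
        push_cast
        ring
      rw [e]
      ring
    rw [Finset.sum_congr rfl fun j _ => e j, ← Finset.mul_sum]
    generalize (∑ j : Fin 4, cPoly z1 z2 β1 β2 y μ j (Complex.I * w) *
            Complex.exp (-Complex.I * w * (aSBM z1 z2 x y j))) = N
    field_simp
  have hne0 : ∀ᵐ w : ℝ, w ≠ 0 := by
    simp [ae_iff]
  have hqm : AEStronglyMeasurable q := by
    apply Measurable.aestronglyMeasurable
    simp only [hq, qF]
    apply Measurable.div <;> exact Continuous.measurable (by fun_prop)
  have hq1 : ∀ w, ‖q w‖ ≤ 1 := fun w =>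
    qF_le β1 β2 μ (z2 - z1) hz' hβ1 hβ2 hμ1 hμ2 w (by simp) (by simp)
  have hb : ∀ K : ℕ, ∀ w, ‖F w * q w ^ K‖ ≤ ‖F w‖ := by
    intro K w
    rw [norm_mul, norm_pow]
    exact mul_le_of_le_one_right (norm_nonneg _) (pow_le_one₀ (norm_nonneg _) (hq1 w))
  have hFq : ∀ K : ℕ, Integrable (fun w => F w * q w ^ K) := fun K =>
    hFi.mono (hFi.aestronglyMeasurable.mul (hqm.pow K)) (Filter.Eventually.of_forall (hb K))
  have hlim : Filter.Tendsto (fun K : ℕ => ∫ w, F w * q w ^ K) Filter.atTop (nhds 0) := by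
    have := tendsto_integral_of_dominated_convergence (μ := volume)
      (F := fun (K : ℕ) (w : ℝ) => F w * q w ^ K) (f := fun _ => 0)
      (fun w => ‖F w‖) (fun K => (hFq K).aestronglyMeasurable) hFi.norm
      (fun K => Filter.Eventually.of_forall (hb K)) (by
        filter_upwards [hne0] with w hw
        have := tendsto_pow_atTop_nhds_zero_of_norm_lt_one
          (qF_lt β1 β2 μ (z2 - z1) hβ1 hβ2 hμ1 hμ2 w hw)
        simpa using this.const_mul (F w))
    simpa using this
  have hpart : ∀ K : ℕ, ∑ k ∈ Finset.range K, ∑ j, ∫ w, h j w * q w ^ k =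
      -(∫ w, F w) + ∫ w, F w * q w ^ K := by
    intro K
    have e1 : ∀ k, ∑ j, ∫ w, h j w * q w ^ k = ∫ w, ∑ j, h j w * q w ^ k := fun k =>
      (integral_finsetSum _ fun j _ => (hC j k).1).symm
    rw [Finset.sum_congr rfl fun k _ => e1 k,
      ← integral_finsetSum _ fun k _ => integrable_finsetSum _ fun j _ => (hC j k).1,
      ← integral_neg, ← integral_add (f := fun a => -F a) hFi.neg (hFq K)]
    apply integral_congr_ae
    filter_upwards [hne0] with w hw
    rw [Finset.sum_congr rfl fun k _ => (Finset.sum_mul _ _ _).symm, ← Finset.mul_sum, hhF w hw]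
    have := mul_neg_geom_sum (q w) K
    linear_combination (-F w) * this
  have hsum2 : Summable (fun k : ℕ => ((-(β1 * β2) : ℝ) : ℂ) ^ k *
      ∑ j, (1 / (2 * Real.pi) : ℂ) * ∫ w, f k j w) := by
    refine Summable.of_norm_bounded hsumm fun k => ?_
    rw [Finset.mul_sum]
    exact norm_sum_le _ _
  have hA := hsum2.hasSum.tendsto_sum_nat
  have hB : Filter.Tendsto (fun K : ℕ => ∑ k ∈ Finset.range K, ((-(β1 * β2) : ℝ) : ℂ) ^ k *
      ∑ j, (1 / (2 * Real.pi) : ℂ) * ∫ w, f k j w) Filter.atTop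
      (nhds (-(1 / (2 * Real.pi) : ℂ) * ∫ w, F w)) := by
    have h1 := (hlim.const_add (-(∫ w, F w))).const_mul (1 / (2 * Real.pi) : ℂ)
    rw [add_zero, mul_neg, ← neg_mul] at h1
    refine h1.congr fun K => ?_
    rw [← hpart, Finset.mul_sum]
    refine Finset.sum_congr rfl fun k _ => ?_
    rw [Finset.mul_sum, Finset.mul_sum]
    refine Finset.sum_congr rfl fun j _ => ?_
    rw [← hint]
    ring
  exact tendsto_nhds_unique hB hA
end
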